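/- arXiv:1912.03398 — 5 statements merged into one kernel-verified Lean document; each statement's English description precedes it below -/
import Mathlib

section
/- (Quotient criterion.) Let G be a group generated by elements σ1, σ2, σ3 satisfying (σ1σ2)^2 = (σ2σ3)^2 = (σ1σ2σ3)^2 = 1, and let θ : G → H be a group homomorphism with θ(σj) = λj for 1 ≤ j ≤ 3, such that the restriction of θ to the subgroup ⟨σ1, σ2⟩ (or to ⟨σ2, σ3⟩) is injective. If the triple (λ1, λ2, λ3) generates H and satisfies the chiral intersection condition in H, namely ⟨λ1⟩ ∩ ⟨λ2, λ3⟩ = {1} = ⟨λ1, λ2⟩ ∩ ⟨λ3⟩ and ⟨λ1, λ2⟩ ∩ ⟨λ2, λ3⟩ = ⟨λ2⟩, then the triple (σ1, σ2, σ3) satisfies the chiral intersection condition in G, namely ⟨σ1⟩ ∩ ⟨σ2, σ3⟩ = {1} = ⟨σ1, σ2⟩ ∩ ⟨σ3⟩ and ⟨σ1, σ2⟩ ∩ ⟨σ2, σ3⟩ = ⟨σ2⟩. -/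
/-- The chiral form of the intersection condition for a triple `(t1, t2, t3)` of elements
of a group: `⟨t1⟩ ⊓ ⟨t2, t3⟩ = 1 = ⟨t1, t2⟩ ⊓ ⟨t3⟩` and `⟨t1, t2⟩ ⊓ ⟨t2, t3⟩ = ⟨t2⟩`. -/
def ChiralIC {G : Type*} [Group G] (t1 t2 t3 : G) : Prop :=
  Subgroup.closure {t1} ⊓ Subgroup.closure {t2, t3} = ⊥ ∧
  Subgroup.closure {t1, t2} ⊓ Subgroup.closure {t3} = ⊥ ∧
  Subgroup.closure {t1, t2} ⊓ Subgroup.closure {t2, t3} = Subgroup.closure {t2}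

/-- The quotient criterion for chiral 4-polytopes. -/
theorem quotient_criterion {G H : Type*} [Group G] [Group H]
    (s1 s2 s3 : G) (hgen : Subgroup.closure {s1, s2, s3} = ⊤)
    (h12 : (s1 * s2) ^ 2 = 1) (h23 : (s2 * s3) ^ 2 = 1) (h123 : (s1 * s2 * s3) ^ 2 = 1)
    (f : G →* H)
    (hinj : Set.InjOn f ((Subgroup.closure {s1, s2} : Subgroup G) : Set G) ∨
            Set.InjOn f ((Subgroup.closure {s2, s3} : Subgroup G) : Set G))
    (hHgen : Subgroup.closure {f s1, f s2, f s3} = ⊤)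
    (hH : ChiralIC (f s1) (f s2) (f s3)) :
    ChiralIC s1 s2 s3 := by
  obtain ⟨h1, h2, h3⟩ := hH
  have hm : ∀ (S : Set G) (x : G), x ∈ Subgroup.closure S →
      f x ∈ Subgroup.closure (f '' S) := by
    intro S x hx
    rw [← MonoidHom.map_closure]
    exact Subgroup.mem_map_of_mem f hx
  have m1 : ∀ x ∈ Subgroup.closure {s1}, f x ∈ Subgroup.closure {f s1} := by
    intro x hx
    simpa [Set.image_singleton] using hm _ x hx
  have m3 : ∀ x ∈ Subgroup.closure {s3}, f x ∈ Subgroup.closure {f s3} := by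
    intro x hx
    simpa [Set.image_singleton] using hm _ x hx
  have m12 : ∀ x ∈ Subgroup.closure {s1, s2}, f x ∈ Subgroup.closure {f s1, f s2} := by
    intro x hx
    have := hm _ x hx
    rwa [Set.image_pair] at this
  have m23 : ∀ x ∈ Subgroup.closure {s2, s3}, f x ∈ Subgroup.closure {f s2, f s3} := by
    intro x hx
    have := hm _ x hx
    rwa [Set.image_pair] at this
  have l1 : Subgroup.closure {s1} ≤ Subgroup.closure {s1, s2} :=
    Subgroup.closure_mono (by simp)
  have l2 : Subgroup.closure {s2} ≤ Subgroup.closure {s1, s2} :=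
    Subgroup.closure_mono (by simp)
  have l2' : Subgroup.closure {s2} ≤ Subgroup.closure {s2, s3} :=
    Subgroup.closure_mono (by simp)
  have l3 : Subgroup.closure {s3} ≤ Subgroup.closure {s2, s3} :=
    Subgroup.closure_mono (by simp)
  have inj : ∀ x ∈ Subgroup.closure {s1, s2}, x ∈ Subgroup.closure {s2, s3} →
      ∀ y ∈ Subgroup.closure {s1, s2}, y ∈ Subgroup.closure {s2, s3} → f x = f y → x = y := by
    intro x hx hx' y hy hy' e
    rcases hinj with h | h
    · exact h hx hy e
    · exact h hx' hy' e
  refine ⟨?_, ?_, ?_⟩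
  · rw [eq_bot_iff]
    rintro x ⟨hx, hx'⟩
    have : f x ∈ (⊥ : Subgroup H) := h1 ▸ ⟨m1 x hx, m23 x hx'⟩
    rw [Subgroup.mem_bot] at this ⊢
    exact inj x (l1 hx) hx' 1 (one_mem _) (one_mem _) (by rw [this, map_one])
  · rw [eq_bot_iff]
    rintro x ⟨hx, hx'⟩
    have : f x ∈ (⊥ : Subgroup H) := h2 ▸ ⟨m12 x hx, m3 x hx'⟩
    rw [Subgroup.mem_bot] at this ⊢
    exact inj x hx (l3 hx') 1 (one_mem _) (one_mem _) (by rw [this, map_one])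
  · refine le_antisymm ?_ (le_inf l2 l2')
    rintro x ⟨hx, hx'⟩
    have : f x ∈ Subgroup.closure {f s2} := h3 ▸ ⟨m12 x hx, m23 x hx'⟩
    obtain ⟨k, hk⟩ := Subgroup.mem_closure_singleton.1 this
    have hs : s2 ^ k ∈ Subgroup.closure {s2} := Subgroup.mem_closure_singleton.2 ⟨k, rfl⟩
    rw [inj x hx hx' (s2 ^ k) (l2 hs) (l2' hs) (by rw [map_zpow, hk])]
    exact hs
end

section
/- In the group U, the elements x = (ac^{-1})^4 and y = (c^{-1}a)^4 commute with each other, i.e., xy = yx. -/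
/-- The defining relators of the group `U` on generators `a, b, c` (indexed `0, 1, 2`):
`a^4, b^4, c^4, (ab)^2, (bc)^2, (abc)^2, (a^2b^2)^4, a^2c^2b^2(ac)^2, [a,c⁻¹]b^2`,
where `[x,y] = x⁻¹y⁻¹xy`. -/
def Urels : Set (FreeGroup (Fin 3)) :=
  {(FreeGroup.of 0) ^ 4, (FreeGroup.of 1) ^ 4, (FreeGroup.of 2) ^ 4,
   (FreeGroup.of 0 * FreeGroup.of 1) ^ 2,
   (FreeGroup.of 1 * FreeGroup.of 2) ^ 2,
   (FreeGroup.of 0 * FreeGroup.of 1 * FreeGroup.of 2) ^ 2,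
   ((FreeGroup.of 0) ^ 2 * (FreeGroup.of 1) ^ 2) ^ 4,
   (FreeGroup.of 0) ^ 2 * (FreeGroup.of 2) ^ 2 * (FreeGroup.of 1) ^ 2 *
     (FreeGroup.of 0 * FreeGroup.of 2) ^ 2,
   (FreeGroup.of 0)⁻¹ * FreeGroup.of 2 * FreeGroup.of 0 * (FreeGroup.of 2)⁻¹ *
     (FreeGroup.of 1) ^ 2}

/-- The finitely presented group `U`. -/
abbrev UGroup : Type := PresentedGroup Urels

/-- The generator `a` of `U`. -/
def Ua : UGroup := PresentedGroup.of 0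

/-- The generator `b` of `U`. -/
def Ub : UGroup := PresentedGroup.of 1

/-- The generator `c` of `U`. -/
def Uc : UGroup := PresentedGroup.of 2

/-- The element `x = (ac⁻¹)^4` of `U`. -/
def Ux : UGroup := (Ua * Uc⁻¹) ^ 4

/-- The element `y = (c⁻¹a)^4` of `U`. -/
def Uy : UGroup := (Uc⁻¹ * Ua) ^ 4

theorem U_tr {G : Type*} {u v : G} (w : G) (h : w = u) (k : w = v) : u = v :=
  h.symm.trans k

theorem U_aux {G : Type*} [Group G] (a b c A B C : G)
    (r0 : ∀ t, a*(A*t) = t)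
    (r2 : ∀ t, A*(a*t) = t)
    (r4 : ∀ t, b*(B*t) = t)
    (r6 : ∀ t, B*(b*t) = t)
    (r8 : ∀ t, c*(C*t) = t)
    (r10 : ∀ t, C*(c*t) = t)
    (r12 : ∀ t, a*(a*(a*(a*t))) = t)
    (r14 : ∀ t, b*(b*(b*(b*t))) = t)
    (r16 : ∀ t, c*(c*(c*(c*t))) = t)
    (r18 : ∀ t, a*(b*(a*(b*t))) = t)
    (r20 : ∀ t, b*(c*(b*(c*t))) = t)
    (r22 : ∀ t, a*(b*(c*(a*(b*(c*t))))) = t)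
    (r26 : ∀ t, a*(a*(c*(c*(b*(b*(a*(c*(a*(c*t))))))))) = t)
    (t : G) : a*(C*(a*(C*(a*(C*(a*(C*(C*(a*(C*(a*(C*(a*(C*(a*t))))))))))))))) = C*(a*(C*(a*(C*(a*(C*(a*(a*(C*(a*(C*(a*(C*(a*(C*t))))))))))))))) := by
  have r30 (t) : a*(a*(a*t)) = A*t :=
    U_tr (a*(a*(a*(a*(A*t))))) (by rw [r0 t]) (by rw [r12 (A*t)])
  have r31 (t) : A*(A*t) = a*(a*t) :=
    U_tr (a*(a*(a*(A*t)))) (by rw [r30 (A*t)]) (by rw [r0 t])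
  have r32 (t) : b*(b*(b*t)) = B*t :=
    U_tr (b*(b*(b*(b*(B*t))))) (by rw [r4 t]) (by rw [r14 (B*t)])
  have r33 (t) : b*(b*t) = B*(B*t) :=
    U_tr (b*(b*(b*(B*t)))) (by rw [r4 t]) (by rw [r32 (B*t)])
  have r35 (t) : a*(a*(c*(c*(B*(B*(a*(c*(a*(c*t))))))))) = t :=
    U_tr (a*(a*(c*(c*(b*(b*(a*(c*(a*(c*t)))))))))) (by rw [r33 (a*(c*(a*(c*t))))]) (by rw [r26 t])
  have r37 (t) : B*(B*(B*t)) = b*t :=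
    U_tr (b*(b*(B*t))) (by rw [r33 (B*t)]) (by rw [r4 t])
  have r38 (t) : c*(c*(c*t)) = C*t :=
    U_tr (c*(c*(c*(c*(C*t))))) (by rw [r8 t]) (by rw [r16 (C*t)])
  have r39 (t) : c*(c*t) = C*(C*t) :=
    U_tr (c*(c*(c*(C*t)))) (by rw [r8 t]) (by rw [r38 (C*t)])
  have r40 (t) : a*(a*(C*(C*(B*(B*(a*(c*(a*(c*t))))))))) = t :=
    U_tr (a*(a*(c*(c*(B*(B*(a*(c*(a*(c*t)))))))))) (by rw [r39 (B*(B*(a*(c*(a*(c*t))))))]) (by rw [r35 t])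
  have r41 (t) : C*(C*(C*t)) = c*t :=
    U_tr (c*(c*(C*t))) (by rw [r39 (C*t)]) (by rw [r8 t])
  have r42 (t) : b*(a*(b*t)) = A*t :=
    U_tr (A*(a*(b*(a*(b*t))))) (by rw [r2 (b*(a*(b*t)))]) (by rw [r18 t])
  have r43 (t) : A*(B*t) = b*(a*t) :=
    U_tr (b*(a*(b*(B*t)))) (by rw [r42 (B*t)]) (by rw [r4 t])
  have r45 (t) : A*(b*(a*t)) = a*(a*(B*t)) :=
    U_tr (A*(A*(B*t))) (by rw [r43 t]) (by rw [r31 (B*t)])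
  have r46 (t) : a*(b*t) = B*(A*t) :=
    U_tr (B*(b*(a*(b*t)))) (by rw [r6 (a*(b*t))]) (by rw [r42 t])
  have r47 (t) : B*(A*(c*(B*(A*(c*t))))) = t :=
    U_tr (a*(b*(c*(a*(b*(c*t)))))) (by rw [r46 (c*(a*(b*(c*t)))), r46 (c*t)]) (by rw [r22 t])
  have r48 (t) : a*(B*(B*t)) = B*(A*(b*t)) :=
    U_tr (a*(b*(b*t))) (by rw [r33 t]) (by rw [r46 (b*t)])
  have r51 (t) : c*(b*(c*t)) = B*t :=
    U_tr (B*(b*(c*(b*(c*t))))) (by rw [r6 (c*(b*(c*t)))]) (by rw [r20 t])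
  have r52 (t) : c*(b*t) = B*(C*t) :=
    U_tr (c*(b*(c*(C*t)))) (by rw [r8 t]) (by rw [r51 (C*t)])
  have r53 (t) : B*(C*(B*t)) = c*t :=
    U_tr (c*(b*(B*t))) (by rw [r52 (B*t)]) (by rw [r4 t])
  have r55 (t) : c*(B*(B*t)) = B*(C*(b*t)) :=
    U_tr (c*(b*(b*t))) (by rw [r33 t]) (by rw [r52 (b*t)])
  have r56 (t) : c*(B*(C*t)) = C*(C*(b*t)) :=
    U_tr (c*(c*(b*t))) (by rw [r52 t]) (by rw [r39 (b*t)])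
  have r57 (t) : C*(B*t) = b*(c*t) :=
    U_tr (b*(B*(C*(B*t)))) (by rw [r4 (C*(B*t))]) (by rw [r53 t])
  have r59 (t) : a*(a*(C*(b*(c*(B*(a*(c*(a*(c*t))))))))) = t :=
    U_tr (a*(a*(C*(C*(B*(B*(a*(c*(a*(c*t)))))))))) (by rw [r57 (B*(a*(c*(a*(c*t)))))]) (by rw [r40 t])
  have r65 (t) : A*(c*(B*(A*(c*t)))) = b*t :=
    U_tr (b*(B*(A*(c*(B*(A*(c*t))))))) (by rw [r4 (A*(c*(B*(A*(c*t)))))]) (by rw [r47 t])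
  have r66 (t) : c*(B*(A*(c*t))) = B*(A*t) :=
    U_tr (a*(A*(c*(B*(A*(c*t)))))) (by rw [r0 (c*(B*(A*(c*t))))]) (by rw [r65 t, r46 t])
  have r67 (t) : c*(B*(A*t)) = B*(A*(C*t)) :=
    U_tr (c*(B*(A*(c*(C*t))))) (by rw [r8 t]) (by rw [r66 (C*t)])
  have r68 (t) : B*(A*(C*(a*t))) = c*(B*t) :=
    U_tr (c*(B*(A*(a*t)))) (by rw [r67 (a*t)]) (by rw [r2 t])
  have r69 (t) : b*(c*(A*(C*t))) = B*(A*t) :=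
    U_tr (C*(c*(B*(A*t)))) (by rw [r67 t, r57 (A*(C*t))]) (by rw [r10 (B*(A*t))])
  have r71 (t) : C*(b*(c*(A*t))) = B*(A*(C*(C*t))) :=
    U_tr (c*(c*(B*(A*t)))) (by rw [r39 (B*(A*t)), r57 (A*t)]) (by rw [r67 t, r67 (C*t)])
  have r72 (t) : B*(A*(b*(c*t))) = c*(a*t) :=
    U_tr (c*(B*(A*(B*t)))) (by rw [r67 (B*t), r57 t]) (by rw [r43 t, r6 (a*t)])
  have r73 (t) : A*(C*(a*t)) = b*(c*(B*t)) :=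
    U_tr (b*(B*(A*(C*(a*t))))) (by rw [r4 (A*(C*(a*t)))]) (by rw [r68 t])
  have r74 (t) : B*(A*(c*(B*t))) = C*(a*t) :=
    U_tr (a*(A*(C*(a*t)))) (by rw [r73 t, r46 (c*(B*t))]) (by rw [r0 (C*(a*t))])
  have r75 (t) : A*(b*(c*(B*t))) = a*(a*(C*(a*t))) :=
    U_tr (A*(A*(C*(a*t)))) (by rw [r73 t]) (by rw [r31 (C*(a*t))])
  have r77 (t) : c*(A*(C*t)) = B*(B*(A*t)) :=
    U_tr (B*(b*(c*(A*(C*t))))) (by rw [r6 (c*(A*(C*t)))]) (by rw [r69 t])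
  have r78 (t) : B*(B*(A*(c*t))) = c*(A*t) :=
    U_tr (c*(A*(C*(c*t)))) (by rw [r77 (c*t)]) (by rw [r10 t])
  have r83 (t) : B*(A*(C*(C*(a*t)))) = C*(b*(c*t)) :=
    U_tr (C*(b*(c*(A*(a*t))))) (by rw [r71 (a*t)]) (by rw [r2 t])
  have r84 (t) : b*(c*(A*t)) = B*(A*(c*t)) :=
    U_tr (c*(C*(b*(c*(A*t))))) (by rw [r8 (b*(c*(A*t)))]) (by rw [r71 t, r67 (C*(C*t)), r41 t])
  have r85 (t) : B*(A*(c*(a*t))) = b*(c*t) :=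
    U_tr (b*(c*(A*(a*t)))) (by rw [r84 (a*t)]) (by rw [r2 t])
  have r86 (t) : b*(c*(a*(a*t))) = B*(A*(c*(A*t))) :=
    U_tr (b*(c*(A*(A*t)))) (by rw [r31 t]) (by rw [r84 (A*t)])
  have r88 (t) : a*(B*(A*(c*t))) = B*(A*(c*(A*t))) :=
    U_tr (a*(b*(c*(A*t)))) (by rw [r84 t]) (by rw [r46 (c*(A*t))])
  have r89 (t) : A*(b*(c*t)) = b*(c*(a*t)) :=
    U_tr (b*(B*(A*(b*(c*t))))) (by rw [r4 (A*(b*(c*t)))]) (by rw [r72 t])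
  have r90 (t) : a*(a*(C*(a*t))) = b*(c*(a*(B*t))) :=
    U_tr (A*(b*(c*(B*t)))) (by rw [r75 t]) (by rw [r89 (B*t)])
  have r91 (t) : b*(c*(a*(C*t))) = A*(b*t) :=
    U_tr (A*(b*(c*(C*t)))) (by rw [r89 (C*t)]) (by rw [r8 t])
  have r92 (t) : A*(b*(C*(C*t))) = b*(c*(a*(c*t))) :=
    U_tr (A*(b*(c*(c*t)))) (by rw [r39 t]) (by rw [r89 (c*t)])
  have r93 (t) : A*(c*(B*t)) = b*(C*(a*t)) :=
    U_tr (b*(B*(A*(c*(B*t))))) (by rw [r4 (A*(c*(B*t)))]) (by rw [r74 t])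
  have r95 : ∀ t, C*(a*(B*t)) = a*(C*(b*t)) := fun t => by
    have k : b*(C*(a*(B*t))) = b*(a*(C*(b*t))) := U_tr (A*(c*(B*(B*t)))) (by rw [r93 (B*t)]) (by rw [r55 t, r43 (C*(b*t))])
    simpa only [mul_right_inj] using k
  have r96 (t) : A*(C*(C*(b*t))) = b*(C*(a*(C*t))) :=
    U_tr (A*(c*(B*(C*t)))) (by rw [r56 t]) (by rw [r93 (C*t)])
  have r99 (t) : b*(A*(c*t)) = B*(c*(A*t)) :=
    U_tr (B*(B*(B*(A*(c*t))))) (by rw [r37 (A*(c*t))]) (by rw [r78 t])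
  have r103 : ∀ t, c*(A*(b*t)) = B*(a*(C*t)) := fun t => by
    have k : B*(c*(A*(b*t))) = B*(B*(a*(C*t))) := U_tr (b*(A*(c*(b*t)))) (by rw [r99 (b*t)]) (by rw [r52 t, r43 (C*t), r33 (a*(C*t))])
    simpa only [mul_right_inj] using k
  have r104 (t) : c*(B*(a*(C*t))) = C*(C*(A*(b*t))) :=
    U_tr (c*(c*(A*(b*t)))) (by rw [r103 t]) (by rw [r39 (A*(b*t))])
  have r105 (t) : c*(a*(a*(B*t))) = B*(a*(C*(a*t))) :=
    U_tr (c*(A*(b*(a*t)))) (by rw [r45 t]) (by rw [r103 (a*t)])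
  have r106 (t) : A*(c*(a*t)) = B*(B*(c*t)) :=
    U_tr (b*(B*(A*(c*(a*t))))) (by rw [r4 (A*(c*(a*t)))]) (by rw [r85 t, r33 (c*t)])
  have r107 (t) : a*(a*(c*(a*t))) = b*(a*(B*(c*t))) :=
    U_tr (A*(A*(c*(a*t)))) (by rw [r31 (c*(a*t))]) (by rw [r106 t, r43 (B*(c*t))])
  have r110 (t) : a*(B*(A*(C*(C*t)))) = B*(A*(c*(A*(c*t)))) :=
    U_tr (a*(B*(A*(c*(c*t))))) (by rw [r39 t]) (by rw [r88 (c*t)])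
  have r112 (t) : c*(a*(C*t)) = B*(A*(b*t)) :=
    U_tr (B*(b*(c*(a*(C*t))))) (by rw [r6 (c*(a*(C*t)))]) (by rw [r91 t])
  have r113 (t) : C*(C*(a*(C*t))) = B*(A*(C*(b*t))) :=
    U_tr (c*(c*(a*(C*t)))) (by rw [r39 (a*(C*t))]) (by rw [r112 t, r67 (b*t)])
  have r122 : ∀ t, c*(a*(B*(A*t))) = B*(a*(a*(C*t))) := fun t => by
    have k : B*(c*(a*(B*(A*t)))) = B*(B*(a*(a*(C*t)))) := U_tr (b*(A*(c*(A*(b*t))))) (by rw [r99 (A*(b*t)), r31 (b*t), r46 t]) (by rw [r103 t, r43 (a*(C*t)), r33 (a*(a*(C*t)))])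
    simpa only [mul_right_inj] using k
  have r123 (t) : A*(C*(C*(A*(b*t)))) = b*(C*(a*(a*(C*t)))) :=
    U_tr (A*(c*(B*(a*(C*t))))) (by rw [r104 t]) (by rw [r93 (a*(C*t))])
  have r130 (t) : A*(C*(C*(a*t))) = b*(C*(b*(c*t))) :=
    U_tr (b*(B*(A*(C*(C*(a*t)))))) (by rw [r4 (A*(C*(C*(a*t))))]) (by rw [r83 t])
  have r133 (t) : A*(C*(b*(c*t))) = b*(C*(C*(a*t))) :=
    U_tr (A*(C*(a*(a*(C*(a*(b*(A*t)))))))) (by rw [r90 (b*(A*t)), r6 (A*t), r0 t]) (by rw [r73 (a*(C*(a*(b*(A*t))))), r104 (a*(b*(A*t))), r45 (b*(A*t)), r6 (A*t), r0 t])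
  have r134 (t) : a*(a*(C*(b*(c*t)))) = b*(c*(a*(c*(a*t)))) :=
    U_tr (A*(A*(C*(b*(c*t))))) (by rw [r31 (C*(b*(c*t)))]) (by rw [r133 t, r92 (a*t)])
  have r135 (t) : b*(c*(a*(c*(a*(B*(a*(c*(a*(c*t))))))))) = t :=
    U_tr (a*(a*(C*(b*(c*(B*(a*(c*(a*(c*t)))))))))) (by rw [r134 (B*(a*(c*(a*(c*t)))))]) (by rw [r59 t])
  have r138 (t) : a*(a*(B*(a*(c*(a*t))))) = b*(a*(B*(a*(B*(c*t))))) :=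
    U_tr (A*(b*(a*(a*(c*(a*t)))))) (by rw [r45 (a*(c*(a*t)))]) (by rw [r107 t, r33 (a*(B*(c*t))), r43 (B*(a*(B*(c*t))))])
  have r275 (t) : c*(a*(c*(a*(B*(a*(c*(a*(c*t)))))))) = B*t :=
    U_tr (B*(b*(c*(a*(c*(a*(B*(a*(c*(a*(c*t))))))))))) (by rw [r6 (c*(a*(c*(a*(B*(a*(c*(a*(c*t)))))))))]) (by rw [r135 t])
  have r276 (t) : c*(a*(c*(a*(B*(a*(c*(a*t))))))) = B*(C*t) :=
    U_tr (c*(a*(c*(a*(B*(a*(c*(a*(c*(C*t)))))))))) (by rw [r8 t]) (by rw [r275 (C*t)])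
  have r277 (t) : c*(a*(c*(a*(B*(a*(c*t)))))) = B*(C*(A*t)) :=
    U_tr (c*(a*(c*(a*(B*(a*(c*(a*(A*t))))))))) (by rw [r0 t]) (by rw [r276 (A*t)])
  have r278 (t) : c*(a*(c*(a*(B*(a*t))))) = B*(C*(A*(C*t))) :=
    U_tr (c*(a*(c*(a*(B*(a*(c*(C*t)))))))) (by rw [r8 t]) (by rw [r277 (C*t)])
  have r279 (t) : c*(a*(c*(a*(B*t)))) = B*(C*(A*(C*(A*t)))) :=
    U_tr (c*(a*(c*(a*(B*(a*(A*t))))))) (by rw [r0 t]) (by rw [r278 (A*t)])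
  have r281 (t) : a*(c*(a*(B*t))) = b*(A*(C*(A*t))) :=
    U_tr (C*(c*(a*(c*(a*(B*t)))))) (by rw [r10 (a*(c*(a*(B*t))))]) (by rw [r279 t, r57 (C*(A*(C*(A*t)))), r8 (A*(C*(A*t)))])
  have r282 (t) : A*(b*(A*(C*(A*t)))) = c*(a*(B*t)) :=
    U_tr (A*(a*(c*(a*(B*t))))) (by rw [r281 t]) (by rw [r2 (c*(a*(B*t)))])
  have r283 (t) : b*(A*(C*(A*(b*t)))) = a*(c*(a*t)) :=
    U_tr (a*(c*(a*(B*(b*t))))) (by rw [r281 (b*t)]) (by rw [r6 t])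
  have r285 (t) : b*(a*(B*(c*(B*t)))) = B*(a*(a*(C*(A*t)))) :=
    U_tr (a*(a*(c*(a*(B*t))))) (by rw [r107 (B*t)]) (by rw [r281 t, r46 (A*(C*(A*t))), r31 (C*(A*t))])
  have r286 (t) : a*(B*(a*(a*(C*t)))) = B*(B*(c*(B*(a*t)))) :=
    U_tr (a*(c*(a*(B*(A*t))))) (by rw [r122 t]) (by rw [r281 (A*t), r31 t, r73 (a*t), r33 (c*(B*(a*t)))])
  have r293 (t) : c*(a*(B*(a*t))) = A*(b*(A*(C*t))) :=
    U_tr (A*(b*(A*(C*(A*(a*t)))))) (by rw [r282 (a*t)]) (by rw [r2 t])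
  have r295 (t) : C*(A*(b*(A*(C*t)))) = a*(B*(a*t)) :=
    U_tr (C*(c*(a*(B*(a*t))))) (by rw [r293 t]) (by rw [r10 (a*(B*(a*t)))])
  have r296 (t) : C*(a*(C*(b*(a*t)))) = B*(a*(C*(A*(C*t)))) :=
    U_tr (c*(c*(a*(B*(a*t))))) (by rw [r39 (a*(B*(a*t))), r95 (a*t)]) (by rw [r293 t, r103 (A*(C*t))])
  have r298 (t) : A*(b*(A*(C*(b*t)))) = B*(A*(C*(b*(A*t)))) :=
    U_tr (c*(a*(B*(a*(b*t))))) (by rw [r293 (b*t)]) (by rw [r46 t, r48 (A*t), r67 (b*(A*t))])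
  have r300 (t) : A*(C*(A*(b*t))) = B*(a*(c*(a*t))) :=
    U_tr (B*(b*(A*(C*(A*(b*t)))))) (by rw [r6 (A*(C*(A*(b*t))))]) (by rw [r283 t])
  have r301 (t) : a*(B*(a*(c*(a*t)))) = C*(A*(b*t)) :=
    U_tr (a*(A*(C*(A*(b*t))))) (by rw [r300 t]) (by rw [r0 (C*(A*(b*t)))])
  have r302 (t) : b*(a*(B*(a*(B*(c*t))))) = a*(C*(A*(b*t))) :=
    U_tr (a*(a*(B*(a*(c*(a*t)))))) (by rw [r138 t]) (by rw [r301 t])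
  have r317 (t) : B*(B*(a*(a*(C*(A*t))))) = a*(B*(c*(B*t))) :=
    U_tr (B*(b*(a*(B*(c*(B*t)))))) (by rw [r285 t]) (by rw [r6 (a*(B*(c*(B*t))))])
  have r321 (t) : a*(C*(b*(a*(a*(C*t))))) = b*(c*(B*(c*(B*(a*t))))) :=
    U_tr (C*(a*(B*(a*(a*(C*t)))))) (by rw [r95 (a*(a*(C*t)))]) (by rw [r286 t, r57 (B*(c*(B*(a*t))))])
  have r325 (t) : C*(A*(b*(A*t))) = a*(B*(a*(c*t))) :=
    U_tr (C*(A*(b*(A*(C*(c*t)))))) (by rw [r10 t]) (by rw [r295 (c*t)])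
  have r326 (t) : C*(a*(a*(B*(a*t)))) = a*(B*(a*(c*(A*t)))) :=
    U_tr (C*(A*(b*(A*(A*t))))) (by rw [r31 t, r45 (a*t)]) (by rw [r325 (A*t)])
  have r429 (t) : a*(C*(A*(C*(b*t)))) = b*(C*(a*(C*(A*t)))) :=
    U_tr (b*(c*(A*(b*(A*(C*(b*t))))))) (by rw [r84 (b*(A*(C*(b*t)))), r52 (A*(C*(b*t))), r43 (C*(A*(C*(b*t)))), r6 (a*(C*(A*(C*(b*t)))))]) (by rw [r298 t, r67 (C*(b*(A*t))), r4 (A*(C*(C*(b*(A*t))))), r96 (A*t)])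
  have r434 (t) : C*(b*(a*(c*(a*t)))) = b*(C*(a*(a*(C*t)))) :=
    U_tr (A*(C*(a*(B*(a*(c*(a*t))))))) (by rw [r73 (B*(a*(c*(a*t)))), r55 (a*(c*(a*t))), r4 (C*(b*(a*(c*(a*t)))))]) (by rw [r301 t, r123 t])
  have r436 (t) : C*(b*(a*(B*(A*(C*t))))) = b*(C*(a*(a*(C*(b*t))))) :=
    U_tr (C*(b*(a*(c*(a*(b*t)))))) (by rw [r46 t, r67 t]) (by rw [r434 (b*t)])
  have r439 (t) : a*(B*(a*(B*(c*t)))) = B*(a*(C*(A*(b*t)))) :=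
    U_tr (B*(b*(a*(B*(a*(B*(c*t))))))) (by rw [r6 (a*(B*(a*(B*(c*t)))))]) (by rw [r302 t])
  have r468 (t) : b*(a*(a*(C*(A*t)))) = B*(a*(B*(c*(B*t)))) :=
    U_tr (B*(B*(B*(a*(a*(C*(A*t))))))) (by rw [r37 (a*(a*(C*(A*t))))]) (by rw [r317 t])
  have r563 (t) : b*(C*(a*(a*(C*(b*(C*t)))))) = C*(A*(c*(A*(c*t)))) :=
    U_tr (C*(b*(a*(B*(A*(C*(C*t))))))) (by rw [r436 (C*t)]) (by rw [r110 t, r4 (A*(c*(A*(c*t))))])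
  have r565 : ∀ t, C*(b*(a*(C*(A*(b*t))))) = B*(a*(B*(C*(a*(c*t))))) := fun t => by
    have k : a*(C*(b*(a*(C*(A*(b*t)))))) = a*(B*(a*(B*(C*(a*(c*t)))))) := U_tr (C*(a*(a*(B*(a*(B*(c*t))))))) (by rw [r439 t, r95 (a*(C*(A*(b*t))))]) (by rw [r326 (B*(c*t)), r43 (c*t), r52 (a*(c*t))])
    simpa only [mul_right_inj] using k
  have r623 (t) : B*(a*(B*(C*(a*(c*(B*t)))))) = C*(b*(a*(C*(A*t)))) :=
    U_tr (C*(b*(a*(C*(A*(b*(B*t))))))) (by rw [r565 (B*t)]) (by rw [r4 t])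
  have r885 (t) : C*(a*(a*(C*(b*(C*t))))) = B*(C*(A*(c*(A*(c*t))))) :=
    U_tr (B*(b*(C*(a*(a*(C*(b*(C*t)))))))) (by rw [r6 (C*(a*(a*(C*(b*(C*t))))))]) (by rw [r563 t])
  have r933 (t) : a*(B*(C*(a*(c*(B*t))))) = b*(C*(b*(a*(C*(A*t))))) :=
    U_tr (b*(B*(a*(B*(C*(a*(c*(B*t)))))))) (by rw [r4 (a*(B*(C*(a*(c*(B*t))))))]) (by rw [r623 t])
  have r934 (t) : a*(B*(a*(C*(b*(C*(b*t)))))) = b*(C*(b*(a*(C*(b*(a*t)))))) :=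
    U_tr (a*(B*(C*(a*(c*(B*(B*t))))))) (by rw [r55 t, r95 (C*(b*t))]) (by rw [r933 (B*t), r43 t])
  have r1042 (t) : C*(b*(C*(b*(a*(C*(b*(a*t))))))) = a*(C*(b*(a*(C*(b*(C*(b*t))))))) :=
    U_tr (C*(a*(B*(a*(C*(b*(C*(b*t)))))))) (by rw [r934 t]) (by rw [r95 (a*(C*(b*(C*(b*t)))))])
  have r1205 (t) : C*(a*(C*(a*(C*(A*(b*t)))))) = B*(a*(C*(a*(C*(a*(c*t)))))) :=
    U_tr (C*(a*(C*(b*(a*(B*(a*(B*(c*t))))))))) (by rw [r439 t, r4 (a*(C*(A*(b*t))))]) (by rw [r296 (B*(a*(B*(c*t)))), r57 (a*(B*(c*t))), r89 (a*(B*(c*t))), r86 (B*(c*t)), r57 (A*(c*(A*(B*(c*t))))), r46 (c*(A*(c*(A*(B*(c*t)))))), r78 (A*(c*(A*(B*(c*t))))), r31 (c*(A*(B*(c*t)))), r43 (c*t), r52 (a*(c*t)), r105 (C*(a*(c*t)))])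
  have r1207 (t) : C*(a*(C*(a*(C*(b*(c*(a*t))))))) = B*(a*(C*(a*(C*(a*(C*(C*t))))))) :=
    U_tr (C*(a*(C*(a*(C*(A*(b*(c*t)))))))) (by rw [r89 t]) (by rw [r1205 (c*t), r39 t])
  have r1258 (t) : a*(C*(a*(C*(a*(c*(B*t)))))) = b*(C*(a*(C*(a*(C*(A*t)))))) :=
    U_tr (a*(C*(A*(C*(b*(a*(a*(C*(A*t))))))))) (by rw [r468 t, r57 (a*(B*(c*(B*t)))), r89 (a*(B*(c*(B*t)))), r86 (B*(c*(B*t))), r57 (A*(c*(A*(B*(c*(B*t)))))), r46 (c*(A*(c*(A*(B*(c*(B*t))))))), r43 (c*(B*t)), r52 (a*(c*(B*t))), r43 (C*(a*(c*(B*t)))), r52 (a*(C*(a*(c*(B*t))))), r43 (C*(a*(C*(a*(c*(B*t)))))), r6 (a*(C*(a*(C*(a*(c*(B*t)))))))]) (by rw [r429 (a*(a*(C*(A*t)))), r2 (a*(C*(A*t)))])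
  have r1261 (t) : a*(C*(a*(a*(C*(b*(A*(C*t))))))) = b*(C*(a*(C*(a*(C*(a*(a*t))))))) :=
    U_tr (a*(C*(a*(C*(a*(c*(B*(A*t)))))))) (by rw [r67 t, r95 (A*(C*t))]) (by rw [r1258 (A*t), r31 t])
  rw [r113 (a*(C*(a*(C*(a*t))))), r95 (A*(C*(b*(a*(C*(a*(C*(a*t)))))))), r1261 (b*(a*(C*(a*(C*(a*t)))))), r46 (a*(C*(a*(C*(a*t))))), r95 (A*(a*(C*(a*(C*(a*t)))))), r2 (C*(a*(C*(a*t)))), r885 (a*(C*(a*t))), r95 (C*(A*(c*(A*(c*(a*(C*(a*t)))))))), r106 (C*(a*t)), r93 (B*(c*(C*(a*t)))), r95 (c*(C*(a*t))), r8 (a*t), r1042 t, r321 (b*(a*(C*(b*(C*(b*t)))))), r46 (a*(C*(b*(C*(b*t))))), r55 (A*(a*(C*(b*(C*(b*t)))))), r55 (C*(b*(A*(a*(C*(b*(C*(b*t)))))))), r4 (C*(b*(C*(b*(A*(a*(C*(b*(C*(b*t)))))))))), r2 (C*(b*(C*(b*t)))), r90 (C*(a*(C*(a*(C*t))))), r1207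 (B*(C*(a*(C*(a*(C*t)))))), r95 (a*(C*(a*(C*(a*(C*(C*(B*(C*(a*(C*(a*(C*t))))))))))))), r57 (C*(a*(C*(a*(C*t))))), r8 (a*(C*(a*(C*t)))), r296 (C*(a*(C*t))), r95 (a*(C*(A*(C*(C*(a*(C*t))))))), r321 (b*(a*(C*(A*(C*(C*(a*(C*t)))))))), r46 (a*(C*(A*(C*(C*(a*(C*t))))))), r55 (A*(a*(C*(A*(C*(C*(a*(C*t)))))))), r55 (C*(b*(A*(a*(C*(A*(C*(C*(a*(C*t)))))))))), r4 (C*(b*(C*(b*(A*(a*(C*(A*(C*(C*(a*(C*t)))))))))))), r2 (C*(A*(C*(C*(a*(C*t)))))), r130 (C*t), r8 t]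

theorem U_rel (r : FreeGroup (Fin 3)) (h : r ∈ Urels) : PresentedGroup.mk Urels r = 1 :=
  PresentedGroup.one_of_mem h

/-- The elements `x = (ac⁻¹)^4` and `y = (c⁻¹a)^4` of `U` commute. -/
theorem x_comm_y : Ux * Uy = Uy * Ux := by
  have e12 : Ua ^ 4 = 1 := U_rel ((FreeGroup.of 0) ^ 4) (by simp [Urels])
  have e14 : Ub ^ 4 = 1 := U_rel ((FreeGroup.of 1) ^ 4) (by simp [Urels])
  have e16 : Uc ^ 4 = 1 := U_rel ((FreeGroup.of 2) ^ 4) (by simp [Urels])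
  have e18 : (Ua * Ub) ^ 2 = 1 := U_rel (((FreeGroup.of 0) * (FreeGroup.of 1)) ^ 2) (by simp [Urels])
  have e20 : (Ub * Uc) ^ 2 = 1 := U_rel (((FreeGroup.of 1) * (FreeGroup.of 2)) ^ 2) (by simp [Urels])
  have e22 : (Ua * Ub * Uc) ^ 2 = 1 := U_rel (((FreeGroup.of 0) * (FreeGroup.of 1) * (FreeGroup.of 2)) ^ 2) (by simp [Urels])
  have e26 : Ua ^ 2 * Uc ^ 2 * Ub ^ 2 * (Ua * Uc) ^ 2 = 1 := U_rel ((FreeGroup.of 0) ^ 2 * (FreeGroup.of 2) ^ 2 * (FreeGroup.of 1) ^ 2 * ((FreeGroup.of 0) * (FreeGroup.of 2)) ^ 2) (by simp [Urels])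
  have h := U_aux Ua Ub Uc Ua⁻¹ Ub⁻¹ Uc⁻¹
    (by simp)
    (by simp)
    (by simp)
    (by simp)
    (by simp)
    (by simp)
    (fun t => by simpa [pow_succ, mul_assoc] using congrArg (fun z => z * t) e12)
    (fun t => by simpa [pow_succ, mul_assoc] using congrArg (fun z => z * t) e14)
    (fun t => by simpa [pow_succ, mul_assoc] using congrArg (fun z => z * t) e16)
    (fun t => by simpa [pow_succ, mul_assoc] using congrArg (fun z => z * t) e18)
    (fun t => by simpa [pow_succ, mul_assoc] using congrArg (fun z => z * t) e20)
    (fun t => by simpa [pow_succ, mul_assoc] using congrArg (fun z => z * t) e22)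
    (fun t => by simpa [pow_succ, mul_assoc] using congrArg (fun z => z * t) e26) 1
  simp only [mul_one] at h
  simp only [Ux, Uy, pow_succ, pow_zero, one_mul, mul_assoc]
  exact h
end

section
/- In the group U, the subgroup N = ⟨x, y⟩ generated by x = (ac^{-1})^4 and y = (c^{-1}a)^4 is free abelian of rank 2; that is, N is isomorphic to Z ⊕ Z, with {x, y} a free generating set. -/
/-! ### Commutation of `x` and `y`: a small checker for word rewriting certificates -/

/-- Letters `0,1,2,3,4,5` stand for `a, a⁻¹, b, b⁻¹, c, c⁻¹`. -/
def letU : ℕ → UGroup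
  | 0 => Ua
  | 1 => Ua⁻¹
  | 2 => Ub
  | 3 => Ub⁻¹
  | 4 => Uc
  | 5 => Uc⁻¹
  | _ => 1

/-- Evaluate a word in `U`. -/
def evU (w : List ℕ) : UGroup := (w.map letU).prod

theorem evU_append (u v : List ℕ) : evU (u ++ v) = evU u * evU v := by
  simp [evU]

/-- Replace the subword `l` of `w` at position `p` by `r`. -/
def replAt (l r : List ℕ) (p : ℕ) (w : List ℕ) : List ℕ :=
  if (w.drop p).take l.length = l then w.take p ++ (r ++ (w.drop p).drop l.length) else w

theorem evU_replAt (l r : List ℕ) (p : ℕ) (w : List ℕ) (h : evU l = evU r) :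
    evU (replAt l r p w) = evU w := by
  unfold replAt
  split_ifs with h1
  · conv_rhs => rw [← List.take_append_drop p w, ← List.take_append_drop l.length (w.drop p), h1]
    simp only [evU_append, h]
  · rfl

/-- Apply the rules (number, position, direction) one after the other. -/
def runSteps (tab : List (List ℕ × List ℕ)) : List (ℕ × ℕ × ℕ) → List ℕ → List ℕ
  | [], w => w
  | (i, p, d) :: s, w =>
    let q := tab.getD i ([], [])
    runSteps tab s (if d = 0 then replAt q.1 q.2 p w else replAt q.2 q.1 p w)

/-- All the rules hold in `U`. -/
def validTab (tab : List (List ℕ × List ℕ)) : Prop := ∀ q ∈ tab, evU q.1 = evU q.2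

theorem evU_runSteps (tab : List (List ℕ × List ℕ)) (h : validTab tab) (s : List (ℕ × ℕ × ℕ)) :
    ∀ w, evU (runSteps tab s w) = evU w := by
  have key : ∀ i, evU (tab.getD i ([], [])).1 = evU (tab.getD i ([], [])).2 := by
    intro i
    by_cases hi : i < tab.length
    · rw [List.getD_eq_getElem _ _ hi]
      exact h _ (List.getElem_mem hi)
    · rw [List.getD_eq_default _ _ (by omega)]
  induction s with
  | nil => intro w; rfl
  | cons t s ih =>
    obtain ⟨i, p, d⟩ := t
    intro w
    simp only [runSteps]
    rw [ih]
    split_ifs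
    · exact evU_replAt _ _ _ _ (key i)
    · exact evU_replAt _ _ _ _ (key i).symm

/-- Derive new rules successively. -/
def runCert : List (List ℕ × List (ℕ × ℕ × ℕ)) → List (List ℕ × List ℕ) → List (List ℕ × List ℕ)
  | [], tab => tab
  | (u, s) :: c, tab => runCert c (tab ++ [(u, runSteps tab s u)])

theorem validTab_runCert (c : List (List ℕ × List (ℕ × ℕ × ℕ))) :
    ∀ tab, validTab tab → validTab (runCert c tab) := by
  induction c with
  | nil => intro tab h; exact h
  | cons t c ih =>
    obtain ⟨u, s⟩ := t
    intro tab h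
    refine ih _ ?_
    intro q hq
    rcases List.mem_append.1 hq with hq | hq
    · exact h q hq
    · rw [List.mem_singleton] at hq
      subst hq
      exact (evU_runSteps tab h s u).symm

/-- Free cancellation and the defining relators. -/
def baseTab : List (List ℕ × List ℕ) :=
  [([0,1], []), ([1,0], []), ([2,3], []), ([3,2], []), ([4,5], []), ([5,4], []),
   ([0,0,0,0], []), ([2,2,2,2], []), ([4,4,4,4], []), ([0,2,0,2], []), ([2,4,2,4], []),
   ([0,2,4,0,2,4], []), ([0,0,2,2,0,0,2,2,0,0,2,2,0,0,2,2], []),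
   ([0,0,4,4,2,2,0,4,0,4], []), ([1,4,0,5,2,2], [])]

theorem rel_one {r : FreeGroup (Fin 3)} (h : r ∈ Urels) : (PresentedGroup.mk Urels) r = 1 :=
  PresentedGroup.one_of_mem h

theorem validTab_base : validTab baseTab := by
  have h1 := rel_one (r := (FreeGroup.of 0) ^ 4) (by simp [Urels])
  have h2 := rel_one (r := (FreeGroup.of 1) ^ 4) (by simp [Urels])
  have h3 := rel_one (r := (FreeGroup.of 2) ^ 4) (by simp [Urels])
  have h4 := rel_one (r := (FreeGroup.of 0 * FreeGroup.of 1) ^ 2) (by simp [Urels])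
  have h5 := rel_one (r := (FreeGroup.of 1 * FreeGroup.of 2) ^ 2) (by simp [Urels])
  have h6 := rel_one (r := (FreeGroup.of 0 * FreeGroup.of 1 * FreeGroup.of 2) ^ 2)
    (by simp [Urels])
  have h7 := rel_one (r := ((FreeGroup.of 0) ^ 2 * (FreeGroup.of 1) ^ 2) ^ 4) (by simp [Urels])
  have h8 := rel_one (r := (FreeGroup.of 0) ^ 2 * (FreeGroup.of 2) ^ 2 * (FreeGroup.of 1) ^ 2 *
     (FreeGroup.of 0 * FreeGroup.of 2) ^ 2) (by simp [Urels])
  have h9 := rel_one (r := (FreeGroup.of 0)⁻¹ * FreeGroup.of 2 * FreeGroup.of 0 *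
     (FreeGroup.of 2)⁻¹ * (FreeGroup.of 1) ^ 2) (by simp [Urels])
  have ea : (PresentedGroup.mk Urels) (FreeGroup.of 0) = Ua := rfl
  have eb : (PresentedGroup.mk Urels) (FreeGroup.of 1) = Ub := rfl
  have ec : (PresentedGroup.mk Urels) (FreeGroup.of 2) = Uc := rfl
  simp only [map_mul, map_pow, map_inv, ea, eb, ec, pow_succ, pow_zero, one_mul, mul_assoc]
    at h1 h2 h3 h4 h5 h6 h7 h8 h9
  intro q hq
  simp only [baseTab, List.mem_cons, List.not_mem_nil, or_false] at hq
  rcases hq with rfl | rfl | rfl | rfl | rfl | rfl | rfl | rfl | rfl | rfl | rfl | rfl | rfl |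
    rfl | rfl <;>
    simp only [evU, letU, List.map_cons, List.map_nil, List.prod_cons, List.prod_nil, mul_one,
      mul_inv_cancel, inv_mul_cancel, h1, h2, h3, h4, h5, h6, h7, h8, h9]

/-- The derivation: each entry is a word with the rewriting steps applied to it. -/
def certU : List (List ℕ × List (ℕ × ℕ × ℕ)) := [
  ([0,0,0], [(0,3,1), (6,0,0)]),
  ([2,2,2], [(2,3,1), (7,0,0)]),
  ([4,4,4], [(4,3,1), (8,0,0)]),
  ([2,0,2], [(1,0,1), (9,1,0)]),
  ([4,2,4], [(3,0,1), (10,1,0)]),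
  ([2,4,2], [(4,3,1), (10,0,0)]),
  ([0,0], [(0,2,1), (15,0,0)]),
  ([2,2], [(2,2,1), (16,0,0)]),
  ([5,5], [(17,0,1), (4,2,0)]),
  ([2,0], [(2,2,1), (18,0,0)]),
  ([3,1], [(18,1,1), (3,0,0)]),
  ([3,5], [(19,0,1), (4,2,0)]),
  ([2,4], [(5,0,1), (19,1,0)]),
  ([1,1,1], [(21,0,1), (0,1,0)]),
  ([3,3,3], [(22,0,1), (2,1,0)]),
  ([0,5,3,0,5,3], [(27,4,1), (27,1,1), (11,0,0)]),
  ([1,4,0,5,3,3], [(22,4,1), (14,0,0)]),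
  ([3,4,4], [(19,0,1), (17,2,0)]),
  ([3,3,0,2], [(22,0,1), (18,1,0)]),
  ([3,3,4,2], [(22,0,1), (20,1,0)]),
  ([2,5,3], [(27,1,1), (22,0,0)]),
  ([5,3,0,5,3], [(1,0,1), (30,1,0)]),
  ([4,0,5,3,3], [(0,0,1), (31,1,0)]),
  ([1,4,0,5,3], [(3,5,1), (31,0,0)]),
  ([5,3,0,5], [(3,4,1), (36,0,0)]),
  ([4,0,5,3], [(3,4,1), (37,0,0)]),
  ([0,5,3,3], [(5,0,1), (37,1,0)]),
  ([4,0,5,2], [(29,3,1), (37,0,0)]),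
  ([1,4,0,5], [(3,4,1), (38,0,0), (22,0,0)]),
  ([3,0,5], [(4,0,1), (39,1,0)]),
  ([5,3,0], [(5,3,1), (39,0,0), (27,1,0)]),
  ([4,0,5], [(3,3,1), (40,0,0), (22,1,0)]),
  ([5,3,3], [(1,0,1), (41,1,0)]),
  ([5,0,3], [(41,0,1), (29,2,0)]),
  ([3,3,4], [(43,0,1), (5,3,0)]),
  ([4,1,5,3], [(27,2,1), (44,0,1), (5,2,0)]),
  ([1,4,0,2], [(49,0,1), (34,0,0)]),
  ([2,1,4,0], [(49,1,1), (2,0,0)]),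
  ([3,0,2], [(50,0,1), (3,3,0)]),
  ([4,0,2], [(0,0,1), (51,1,0)]),
  ([2,1,4], [(0,3,1), (52,0,0)]),
  ([1,4,0,3,3], [(49,0,1), (22,3,1), (34,0,0)]),
  ([2,5,0], [(34,0,1), (24,3,0), (49,0,0), (0,2,0)]),
  ([5,1,1,2], [(21,1,1), (41,0,1), (33,2,0)]),
  ([5,0,5,2], [(17,0,1), (42,2,0)]),
  ([5,1,5,3], [(45,1,1), (23,0,0)]),
  ([2,1,5,3], [(45,1,1), (35,0,0), (49,0,0), (21,2,0)]),
  ([4,0,4,4], [(23,2,1), (46,0,0), (26,2,0)]),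
  ([5,1,5,0], [(47,1,1), (23,0,0)]),
  ([5,1,4,0], [(49,1,1), (47,0,0)]),
  ([3,0,3,3], [(50,0,1), (29,3,0)]),
  ([2,5,1,1], [(21,2,1), (57,0,0)]),
  ([1,4,1,1,2], [(61,0,1), (3,3,0)]),
  ([4,1,1,2], [(0,0,1), (67,1,0)]),
  ([1,1,4,4,3,3,0,4,0,4], [(22,4,1), (21,0,1), (13,0,0)]),
  ([4,1,4,4,3], [(2,4,1), (26,3,1), (57,1,1), (32,0,1), (37,2,0)]),
  ([3,0,4,1,5], [(53,2,1), (50,0,1), (33,3,0)]),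
  ([5,3,4,3], [(27,0,1), (23,1,1), (27,2,1), (56,0,1), (49,3,0), (0,2,0)]),
  ([4,1,4,4,0], [(72,1,1), (4,0,0)]),
  ([5,0,4,4,3], [(23,2,1), (27,3,1), (59,0,0)]),
  ([5,1,1,5,0], [(47,2,1), (60,0,0)]),
  ([5,1,5,1,1], [(21,3,1), (63,0,0)]),
  ([5,1,4,1,1], [(21,3,1), (64,0,0)]),
  ([3,0,3,4,2], [(26,3,1), (65,0,0)]),
  ([1,4,4,3,3,0,4,0,4], [(0,0,1), (69,1,0)]),
  ([1,1,4,4,3,3,0,4,0], [(4,9,1), (69,0,0)]),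
  ([4,4,3,3,0,4,0,4], [(0,0,1), (79,1,0), (21,0,0)]),
  ([1,4,4,3,3,0,4,0], [(4,8,1), (79,0,0)]),
  ([1,1,4,4,3,3,0,4], [(0,8,1), (80,0,0)]),
  ([4,4,3,3,0,4,0], [(4,7,1), (81,0,0)]),
  ([4,3,3,0,4,0,4], [(5,0,1), (81,1,0)]),
  ([3,4,0,3,0,4,0], [(70,0,1), (82,1,0), (46,0,0)]),
  ([1,1,4,4,3,3,0], [(4,7,1), (83,0,0)]),
  ([4,4,3,3,0,4], [(0,6,1), (84,0,0)]),
  ([3,3,0,4,0,4], [(5,0,1), (85,1,0), (23,0,0)]),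
  ([4,0,3,0,4,0], [(2,0,1), (86,1,0), (24,0,0), (29,1,0)]),
  ([4,0,3,0,4], [(0,5,1), (90,0,0)]),
  ([0,3,0,4,0], [(5,0,1), (90,1,0)]),
  ([4,0,3,0], [(4,4,1), (91,0,0)]),
  ([3,0,4,0], [(1,0,1), (92,1,0)]),
  ([1,2,1,5,1], [(93,0,1), (0,3,0)]),
  ([2,1,5,1], [(0,0,1), (95,1,0)]),
  ([1,1,4,4,3,3], [(0,6,1), (87,0,0)]),
  ([4,4,3,3,0], [(4,5,1), (88,0,0)]),
  ([4,1,4,3,0], [(66,1,1), (32,0,1), (89,1,1), (29,0,0), (24,0,0)]),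
  ([4,0,4,1,2], [(44,2,1), (93,0,0), (23,3,0), (55,1,0)]),
  ([0,2,1,2,5], [(25,0,1), (21,1,1), (54,2,1), (94,0,0), (22,3,0)]),
  ([0,4,4,3,3], [(28,0,1), (97,1,0)]),
  ([1,3,4,0,4,1], [(99,0,1), (0,4,0)]),
  ([1,1,5,1,3,3], [(101,1,1), (1,0,0)]),
  ([3,4,0,4,1], [(0,0,1), (103,1,0)]),
  ([0,4,0,4,2,1], [(26,3,1), (96,0,1), (102,1,1), (24,0,0), (32,1,0), (35,2,0), (49,2,0)]),
  ([1,1,5,1,4,1,5], [(53,4,1), (25,5,1), (104,0,0)]),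
  ([2,1,2,5,1,4], [(107,0,1), (5,6,0)]),
  ([5,0,4,4,1,1], [(89,2,1), (48,0,0), (2,2,0)]),
  ([5,0,5,0,4,0,3], [(96,3,1), (59,0,0), (25,3,0), (21,2,0), (68,1,0), (54,0,0), (23,4,0)]),
  ([4,1,4,1,3,4,1,4], [(100,3,1), (73,0,0)]),
  ([0,5,0,5,0,5,0,5,5,0,5,0,5,0,5,0], [(23,7,0), (46,8,0), (110,3,0), (21,2,0), (58,1,0), (21,0,0), (96,3,0), (32,6,0), (44,10,0), (24,12,0), (77,8,0), (106,3,0), (26,8,0), (24,9,0), (26,13,0), (24,14,0), (105,10,0), (1,9,0), (62,6,0), (1,5,0), (55,7,0), (22,10,1), (111,5,1), (26,12,1), (24,11,1), (26,10,1), (23,4,1), (98,0,1), (76,0,1), (108,3,1), (17,0,1), (71,2,1), (78,4,1), (62,5,1), (75,0,1), (21,1,1), (109,2,1), (21,6,1), (105,7,1), (24,11,1), (26,10,1), (74,4,1), (75,6,1), (21,7,1)])]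

theorem certU_ok : (([0,5,0,5,0,5,0,5,5,0,5,0,5,0,5,0], [5,0,5,0,5,0,5,0,0,5,0,5,0,5,0,5]) :
    List ℕ × List ℕ) ∈ runCert certU baseTab := by
  decide +kernel

theorem Ux_comm_Uy : Commute Ux Uy := by
  have h := validTab_runCert certU baseTab validTab_base _ certU_ok
  simp only [evU, letU, List.map_cons, List.map_nil, List.prod_cons, List.prod_nil, mul_one] at h
  unfold Commute SemiconjBy Ux Uy
  simp only [pow_succ, pow_zero, one_mul, mul_assoc]
  exact h

/-! ### An action of `U` on the plane by integral affine maps -/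

/-- `(p, q) ↦ (q + 1, p - 1)` -/
def affA : Equiv.Perm (ℤ × ℤ) where
  toFun v := (v.2 + 1, v.1 - 1)
  invFun v := (v.2 + 1, v.1 - 1)
  left_inv v := by ext <;> simp
  right_inv v := by ext <;> simp

/-- `(p, q) ↦ (q + 1, -p)` -/
def affB : Equiv.Perm (ℤ × ℤ) where
  toFun v := (v.2 + 1, -v.1)
  invFun v := (-v.2, v.1 - 1)
  left_inv v := by ext <;> simp
  right_inv v := by ext <;> simp

/-- `(p, q) ↦ (q, -p + 1)` -/
def affC : Equiv.Perm (ℤ × ℤ) where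
  toFun v := (v.2, -v.1 + 1)
  invFun v := (1 - v.2, v.1)
  left_inv v := by ext <;> simp
  right_inv v := by ext <;> simp

theorem affA_apply (v : ℤ × ℤ) : affA v = (v.2 + 1, v.1 - 1) := rfl
theorem affB_apply (v : ℤ × ℤ) : affB v = (v.2 + 1, -v.1) := rfl
theorem affC_apply (v : ℤ × ℤ) : affC v = (v.2, -v.1 + 1) := rfl
theorem affA_inv_apply (v : ℤ × ℤ) : affA⁻¹ v = (v.2 + 1, v.1 - 1) := rfl
theorem affC_inv_apply (v : ℤ × ℤ) : affC⁻¹ v = (1 - v.2, v.1) := rfl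

theorem aff_rels : ∀ r ∈ Urels, FreeGroup.lift ![affA, affB, affC] r = 1 := by
  intro r hr
  simp only [Urels, Set.mem_insert_iff, Set.mem_singleton_iff] at hr
  rcases hr with rfl | rfl | rfl | rfl | rfl | rfl | rfl | rfl | rfl <;>
  · simp only [map_mul, map_pow, map_inv, FreeGroup.lift_apply_of, Matrix.cons_val]
    refine Equiv.ext fun v => ?_
    simp only [pow_succ, pow_zero, one_mul, Equiv.Perm.mul_apply, affA_apply, affB_apply,
      affC_apply, affA_inv_apply, affC_inv_apply, Equiv.Perm.one_apply]
    ext <;> ring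

/-- The action of `U` on `ℤ × ℤ`. -/
def affU : UGroup →* Equiv.Perm (ℤ × ℤ) := PresentedGroup.toGroup aff_rels

theorem affU_a : affU Ua = affA := PresentedGroup.toGroup.of aff_rels
theorem affU_c : affU Uc = affC := PresentedGroup.toGroup.of aff_rels

theorem affU_x : affU Ux = Equiv.addRight ((4 : ℤ), (0 : ℤ)) := by
  refine Equiv.ext fun v => ?_
  simp only [Ux, map_pow, map_mul, map_inv, affU_a, affU_c, pow_succ, pow_zero, one_mul,
    Equiv.Perm.mul_apply, affA_apply, affC_inv_apply, Equiv.coe_addRight]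
  ext <;> simp <;> ring

theorem affU_y : affU Uy = Equiv.addRight ((0 : ℤ), (4 : ℤ)) := by
  refine Equiv.ext fun v => ?_
  simp only [Uy, map_pow, map_mul, map_inv, affU_a, affU_c, pow_succ, pow_zero, one_mul,
    Equiv.Perm.mul_apply, affA_apply, affC_inv_apply, Equiv.coe_addRight]
  ext <;> simp <;> ring

theorem addRight_zpow_apply (u w : ℤ × ℤ) (n : ℤ) :
    ((Equiv.addRight u : Equiv.Perm (ℤ × ℤ)) ^ n) w = w + n • u := by
  induction n using Int.induction_on generalizing w with
  | zero => simp
  | succ k ih =>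
    rw [zpow_add_one, Equiv.Perm.mul_apply, ih, add_smul, one_smul, Equiv.coe_addRight,
      add_comm _ u, ← add_assoc]
  | pred k ih =>
    have e : (Equiv.addRight u : Equiv.Perm (ℤ × ℤ))⁻¹ w = w - u := by
      rw [Equiv.Perm.inv_eq_iff_eq]
      simp
    rw [zpow_sub_one, Equiv.Perm.mul_apply, e, ih, sub_smul, one_smul]
    abel

/-- The homomorphism `(m, n) ↦ x ^ m * y ^ n`. -/
def homN : Multiplicative (ℤ × ℤ) →* UGroup where
  toFun v := Ux ^ v.toAdd.1 * Uy ^ v.toAdd.2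
  map_one' := by simp
  map_mul' u v := by
    simp only [toAdd_mul, Prod.fst_add, Prod.snd_add, zpow_add]
    have h := ((Ux_comm_Uy.zpow_zpow v.toAdd.1 u.toAdd.2)).eq
    simp only [mul_assoc]
    rw [← mul_assoc (Ux ^ v.toAdd.1), h]
    simp only [mul_assoc]

theorem homN_apply (v : Multiplicative (ℤ × ℤ)) :
    homN v = Ux ^ v.toAdd.1 * Uy ^ v.toAdd.2 := rfl

theorem homN_injective : Function.Injective homN := by
  rw [injective_iff_map_eq_one]
  intro v hv
  rw [homN_apply] at hv
  have h := congrArg (fun g => affU g ((0 : ℤ), (0 : ℤ))) hv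
  simp only [map_mul, map_zpow, affU_x, affU_y, map_one, Equiv.Perm.mul_apply, addRight_zpow_apply, Equiv.coe_addRight, Equiv.Perm.one_apply] at h
  have h1 := congrArg Prod.fst h
  have h2 := congrArg Prod.snd h
  simp at h1 h2
  apply Multiplicative.toAdd.injective
  exact Prod.ext h1 h2

/-- The subgroup `N = ⟨x, y⟩` of `U` is free abelian of rank 2, with `{x, y}` a free
generating set: there is an injective homomorphism from `ℤ ⊕ ℤ` into `U` sending the
two free generators to `x` and `y`, whose range is `N`. -/
theorem N_free_abelian_rank_two :
    ∃ f : Multiplicative (ℤ × ℤ) →* UGroup,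
      Function.Injective f ∧
      f (Multiplicative.ofAdd ((1 : ℤ), (0 : ℤ))) = Ux ∧
      f (Multiplicative.ofAdd ((0 : ℤ), (1 : ℤ))) = Uy ∧
      f.range = Subgroup.closure {Ux, Uy} := by
  refine ⟨homN, homN_injective, by simp [homN_apply], by simp [homN_apply], ?_⟩
  apply le_antisymm
  · rintro _ ⟨v, rfl⟩
    rw [homN_apply]
    exact mul_mem (zpow_mem (Subgroup.subset_closure (by simp)) _)
      (zpow_mem (Subgroup.subset_closure (by simp)) _)
  · rw [Subgroup.closure_le]
    rintro g (rfl | rfl)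
    · exact ⟨Multiplicative.ofAdd (1, 0), by simp [homN_apply]⟩
    · exact ⟨Multiplicative.ofAdd (0, 1), by simp [homN_apply]⟩
end

section
/- In the group U, with x = (ac^{-1})^4 and y = (c^{-1}a)^4, the following conjugation relations hold: a^{-1}xa = y, b^{-1}xb = y, c^{-1}xc = y, a^{-1}ya = x, b^{-1}yb = x^{-1}, and c^{-1}yc = x^{-1}. -/
theorem st {G : Type*} [Monoid G] {l r : List G} (h : l.prod = r.prod) (p s : List G) :
    (p ++ l ++ s).prod = (p ++ r ++ s).prod := by
  simp only [List.prod_append, h]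

theorem key {G : Type*} [Group G] (a A b B c C : G)
    (ia : [a,A].prod = [].prod) (iA : [A,a].prod = [].prod)
    (ib : [b,B].prod = [].prod) (iB : [B,b].prod = [].prod)
    (ic : [c,C].prod = [].prod) (iC : [C,c].prod = [].prod)
    (h1 : [a,a,a,a].prod = [].prod)
    (h2 : [b,b,b,b].prod = [].prod)
    (h3 : [c,c,c,c].prod = [].prod)
    (h4 : [a,b,a,b].prod = [].prod)
    (h5 : [b,c,b,c].prod = [].prod)
    (h6 : [a,b,c,a,b,c].prod = [].prod)
    (h7 : [a,a,b,b,a,a,b,b,a,a,b,b,a,a,b,b].prod = [].prod)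
    (h8 : [a,a,c,c,b,b,a,c,a,c].prod = [].prod)
    (h9 : [A,c,a,C,b,b].prod = [].prod) :
    [C,a,C,a,C,a,C,a,a].prod = [a,a,C,a,C,a,C,a,C].prod ∧
    [a,C,a,C,a,C,a,C,b].prod = [b,C,a,C,a,C,a,C,a].prod ∧
    [C,a,C,a,C,a,C,a,b].prod = [b,c,A,c,A,c,A,c,A].prod ∧
    [C,a,C,a,C,a,C,a,c].prod = [c,c,A,c,A,c,A,c,A].prod := by
  have r1 : [a,A].prod = [].prod := ia
  have r2 : [A,a].prod = [].prod := iA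
  have r3 : [b,B].prod = [].prod := ib
  have r4 : [B,b].prod = [].prod := iB
  have r5 : [c,C].prod = [].prod := ic
  have r6 : [C,c].prod = [].prod := iC
  have r7 : [a,a,a,a].prod = [].prod := h1
  have r8 : [b,b,b,b].prod = [].prod := h2
  have r9 : [c,c,c,c].prod = [].prod := h3
  have r10 : [a,b,a,b].prod = [].prod := h4
  have r11 : [b,c,b,c].prod = [].prod := h5
  have r12 : [a,a,a].prod = [A].prod := (st r1 [a,a,a] []).symm.trans ((st r7 [] [A]))
  have r13 : [b,b,b].prod = [B].prod := (st r3 [b,b,b] []).symm.trans ((st r8 [] [B]))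
  have r14 : [c,c,c].prod = [C].prod := (st r5 [c,c,c] []).symm.trans ((st r9 [] [C]))
  have r15 : [b,a,b].prod = [A].prod := (st r2 [] [b,a,b]).symm.trans ((st r10 [A] []))
  have r16 : [c,b,c].prod = [B].prod := (st r4 [] [c,b,c]).symm.trans ((st r11 [B] []))
  have r17 : [A,A].prod = [a,a].prod := (st r12 [] [A]).symm.trans ((st r1 [a,a] []))
  have r18 : [B,B].prod = [b,b].prod := (st r13 [] [B]).symm.trans ((st r3 [b,b] []))
  have r19 : [C,C].prod = [c,c].prod := (st r14 [] [C]).symm.trans ((st r5 [c,c] []))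
  have r20 : [A,B].prod = [b,a].prod := (st r15 [] [B]).symm.trans ((st r3 [b,a] []))
  have r21 : [a,b].prod = [B,A].prod := (st r4 [] [a,b]).symm.trans ((st r15 [B] []))
  have r22 : [c,b].prod = [B,C].prod := (st r5 [c,b] []).symm.trans ((st r16 [] [C]))
  have r23 : [B,C,B].prod = [c].prod := (st r22 [] [B]).symm.trans ((st r3 [c] []))
  have r24 : [C,B].prod = [b,c].prod := (st r3 [] [C,B]).symm.trans ((st r23 [b] []))
  have r25 : [B,A,c,B,A,c].prod = [].prod := (st r21 [B,A,c] [c]).symm.trans ((st r21 [] [c,a,b,c]).symm.trans (h6))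
  have r26 : [A,b,a].prod = [a,a,B].prod := (st r20 [A] []).symm.trans ((st r17 [] [B]))
  have r27 : [A,b,b].prod = [b,a,B].prod := (st r18 [A] []).symm.trans ((st r20 [] [B]))
  have r28 : [C,b,b].prod = [b,c,B].prod := (st r18 [C] []).symm.trans ((st r24 [] [B]))
  have r29 : [C,b,c].prod = [c,c,B].prod := (st r24 [C] []).symm.trans ((st r19 [] [B]))
  have r30 : [A,c,B,A,c].prod = [b].prod := (st r3 [] [A,c,B,A,c]).symm.trans ((st r25 [b] []))
  have r31 : [c,B,A,c].prod = [B,A].prod := (st r1 [] [c,B,A,c]).symm.trans ((st r30 [a] []).trans (r21))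
  have r32 : [c,B,A].prod = [B,A,C].prod := (st r5 [c,B,A] []).symm.trans ((st r31 [] [C]))
  have r33 : [B,A,C,a].prod = [c,B].prod := (st r32 [] [a]).symm.trans ((st r2 [c,B] []))
  have r34 : [b,c,A,C].prod = [B,A].prod := (st r24 [] [A,C]).symm.trans ((st r32 [C] []).symm.trans ((st r6 [] [B,A])))
  have r35 : [A,C,a].prod = [b,c,B].prod := (st r3 [] [A,C,a]).symm.trans ((st r33 [b] []))
  have r36 : [c,A,C].prod = [b,b,A].prod := (st r4 [] [c,A,C]).symm.trans ((st r34 [B] []).trans ((st r18 [] [A])))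
  have r37 : [B,A,c,B].prod = [C,a].prod := (st r21 [] [c,B]).symm.trans ((st r35 [a] []).symm.trans ((st r1 [] [C,a])))
  have r38 : [b,b,A,c].prod = [c,A].prod := (st r36 [] [c]).symm.trans ((st r6 [c,A] []))
  have r39 : [A,c,B].prod = [b,C,a].prod := (st r3 [] [A,c,B]).symm.trans ((st r37 [b] []))
  have r40 : [B,c,A].prod = [b,A,c].prod := (st r38 [B] []).symm.trans ((st r4 [] [b,A,c]))
  have r41 : [B,A,c].prod = [b,c,A].prod := (st r13 [] [A,c]).symm.trans ((st r38 [b] []))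
  have r42 : [b,b,c,A].prod = [A,c].prod := (st r24 [b] [A]).symm.trans ((st r21 [b,C] []).symm.trans ((st r39 [] [b]).symm.trans ((st r4 [A,c] []))))
  have r43 : [A,c,a].prod = [b,b,c].prod := (st r42 [] [a]).symm.trans ((st r2 [b,b,c] []))
  have r44 : [B,A,b,c].prod = [c,a].prod := (st r21 [] [b,c]).symm.trans ((st r43 [a] []).symm.trans ((st r1 [] [c,a])))
  have r45 : [A,b,c].prod = [b,c,a].prod := (st r3 [] [A,b,c]).symm.trans ((st r44 [b] []))
  have r46 : [b,c,a,C].prod = [A,b].prod := (st r45 [] [C]).symm.trans ((st r5 [A,b] []))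
  have r47 : [c,a,C].prod = [B,A,b].prod := (st r4 [] [c,a,C]).symm.trans ((st r46 [B] []))
  have r48 : [b,c,A,b].prod = [a,C].prod := (st r24 [] [A,b]).symm.trans ((st r47 [C] []).symm.trans ((st r6 [] [a,C])))
  have r49 : [c,A,b].prod = [B,a,C].prod := (st r4 [] [c,A,b]).symm.trans ((st r48 [B] []))
  have r50 : [c,B,a,a].prod = [B,A,C,A].prod := (st r17 [c,B] []).symm.trans ((st r32 [] [A]))
  have r51 : [a,a,C,a].prod = [b,c,a,B].prod := (st r17 [] [C,a]).symm.trans ((st r35 [A] []).trans ((st r45 [] [B])))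
  have r52 : [c,B,C,b,A].prod = [C,A,C].prod := (st r22 [c] [b,A]).symm.trans ((st r36 [c,c] []).symm.trans ((st r14 [] [A,C])))
  have r53 : [A,b,C,a].prod = [a,a,c,B].prod := (st r39 [A] []).symm.trans ((st r17 [] [c,B]))
  have r54 : [b,C,a,B].prod = [b,a,C,b].prod := (st r39 [] [B]).symm.trans ((st r18 [A,c] []).trans ((st r22 [A] [b]).trans ((st r20 [] [C,b]))))
  have r55 : [B,c,a,a].prod = [b,A,c,A].prod := (st r17 [B,c] []).symm.trans ((st r40 [] [A]))
  have r56 : [A,b,A,c].prod = [b,a,c,A].prod := (st r40 [A] []).symm.trans ((st r20 [] [c,A]))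
  have r57 : [C,b,A,c].prod = [b,c,c,A].prod := (st r40 [C] []).symm.trans ((st r24 [] [c,A]))
  have r58 : [c,a,a,B].prod = [B,a,C,a].prod := (st r26 [c] []).symm.trans ((st r49 [] [a]))
  have r59 : [C,a,B].prod = [a,C,b].prod := (st r4 [] [C,a,B]).symm.trans ((st r54 [B] []).trans ((st r4 [] [a,C,b])))
  have r60 : [C,a,C,b].prod = [c,c,a,B].prod := (st r59 [C] []).symm.trans ((st r19 [] [a,B]))
  have r61 : [a,a,c,B,C,b,a,c,a,c].prod = [].prod := (st r22 [a,a,c] [b,a,c,a,c]).symm.trans (h8)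
  have r62 : [A,c,c,B].prod = [b,c,c,a].prod := (st r42 [] [c,B]).symm.trans ((st r39 [b,b,c] []).trans ((st r22 [b,b] [C,a]).trans ((st r3 [b] [C,C,a]).trans ((st r19 [b] [a])))))
  have r63 : [c,B,a,B,A].prod = [B,A,C,A,b].prod := (st r21 [c,B,a] []).symm.trans ((st r50 [] [b]))
  have r64 : [c,B,C,b,a,a].prod = [C,A,C,A].prod := (st r17 [c,B,C,b] []).symm.trans ((st r52 [] [A]))
  have r65 : [a,c,B,C,b,a,c,a,c].prod = [A].prod := (st r2 [] [a,c,B,C,b,a,c,a,c]).symm.trans ((st r61 [A] []))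
  have r66 : [a,a,c,c,B].prod = [b,c,a,c,a].prod := (st r17 [] [c,c,B]).symm.trans ((st r62 [A] []).trans ((st r45 [] [c,a])))
  have r67 : [c,B,C,b,a,c,a,c].prod = [a,a].prod := (st r2 [] [c,B,C,b,a,c,a,c]).symm.trans ((st r65 [A] []).trans (r17))
  have r68 : [c,B,C,b,a,c,a].prod = [a,a,C].prod := (st r5 [c,B,C,b,a,c,a] []).symm.trans ((st r67 [] [C]))
  have r69 : [c,B,C,b,a,c].prod = [a,a,C,A].prod := (st r1 [c,B,C,b,a,c] []).symm.trans ((st r68 [] [A]))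
  have r70 : [c,B,C,b,a].prod = [a,a,C,A,C].prod := (st r5 [c,B,C,b,a] []).symm.trans ((st r69 [] [C]))
  have r71 : [b,c,a,c,a,B].prod = [C,A,C,A].prod := (st r66 [] [B]).symm.trans ((st r29 [a,a] [B]).symm.trans ((st r35 [a,a,C] []).symm.trans ((st r70 [] [a]).symm.trans (r64))))
  have r72 : [C,a,a,C,A,C].prod = [B,C,b,a].prod := (st r70 [C] []).symm.trans ((st r6 [] [B,C,b,a]))
  have r73 : [C,A,C,A,b].prod = [b,c,a,c,a].prod := (st r71 [] [b]).symm.trans ((st r4 [b,c,a,c,a] []))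
  have r74 : [C,a,a,C,A].prod = [B,C,b,a,c].prod := (st r6 [C,a,a,C,A] []).symm.trans ((st r72 [] [c]))
  have r75 : [A,C,A,b].prod = [B,a,c,a].prod := (st r5 [] [A,C,A,b]).symm.trans ((st r73 [c] []).trans ((st r22 [] [c,a,c,a]).trans ((st r6 [B] [a,c,a]))))
  have r76 : [c,B,a,B,A].prod = [b,b,a,c,a].prod := r63.trans ((st r75 [B] []).trans ((st r18 [] [a,c,a])))
  have r77 : [a,B,a,c,a].prod = [C,A,b].prod := (st r75 [a] []).symm.trans ((st r1 [] [C,A,b]))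
  have r78 : [B,a,c,a,B].prod = [A,C,A].prod := (st r75 [] [B]).symm.trans ((st r3 [A,C,A] []))
  have r79 : [a,c,a,B].prod = [b,A,C,A].prod := (st r3 [] [a,c,a,B]).symm.trans ((st r78 [b] []))
  have r80 : [B,C,b,a,c,a].prod = [C,a,a,C].prod := (st r74 [] [a]).symm.trans ((st r2 [C,a,a,C] []))
  have r81 : [b,b,a,c,a,a].prod = [c,B,a,B].prod := (st r76 [] [a]).symm.trans ((st r2 [c,B,a,B] []))
  have r82 : [B,a,c,a,c].prod = [b,c,c,a,a].prod := (st r75 [] [c]).symm.trans ((st r45 [A,C] []).trans ((st r29 [A] [a]).trans ((st r62 [] [a]))))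
  have r83 : [a,B,a,B,A,b].prod = [C,A,b,C].prod := (st r47 [a,B,a] []).symm.trans ((st r77 [] [C]))
  have r84 : [a,B,A,C,b].prod = [b,A,C,b,a].prod := (st r32 [a] [b]).symm.trans ((st r21 [a,c] [b]).symm.trans ((st r18 [a,c,a] []).symm.trans ((st r79 [] [B]).trans ((st r20 [b,A,C] [])))))
  have r85 : [C,b,a,c,a].prod = [b,C,a,a,C].prod := (st r3 [] [C,b,a,c,a]).symm.trans ((st r80 [b] []))
  have r86 : [B,c,B,a,B].prod = [b,a,c,a,a].prod := (st r81 [B] []).symm.trans ((st r4 [] [b,a,c,a,a]))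
  have r87 : [b,b,c,c,a,a].prod = [a,c,a,c].prod := (st r82 [b] []).symm.trans ((st r3 [] [a,c,a,c]))
  have r88 : [a,c,a,c,A].prod = [b,b,c,c,a].prod := (st r87 [] [A]).symm.trans ((st r1 [b,b,c,c,a] []))
  have r89 : [b,a,B,c,c,a].prod = [c,a,c,A].prod := (st r27 [] [c,c,a]).symm.trans ((st r88 [A] []).symm.trans ((st r2 [] [c,a,c,A])))
  have r90 : [a,B,c,c,a].prod = [B,c,a,c,A].prod := (st r4 [] [a,B,c,c,a]).symm.trans ((st r89 [B] []))
  have r91 : [a,a,c,B,C,b].prod = [C,A,C,A].prod := (st r53 [] [C,b]).symm.trans ((st r60 [A,b] []).trans ((st r45 [] [c,a,B]).trans ((st r79 [b,c] []).trans ((st r22 [b] [A,C,A]).trans ((st r3 [] [C,A,C,A]))))))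
  have r92 : [C,b,C,a,a,C].prod = [c,B,C,a,c,a].prod := (st r85 [C] []).symm.trans ((st r19 [] [b,a,c,a]).trans ((st r22 [c] [a,c,a])))
  have r93 : [a,B,a,a,c,A].prod = [b,a,c,B,a,B].prod := (st r17 [a,B] [c,A]).symm.trans ((st r21 [a] [A,c,A]).symm.trans ((st r55 [a,a] []).symm.trans ((st r26 [] [c,a,a]).symm.trans ((st r86 [A] []).symm.trans ((st r20 [] [c,B,a,B]))))))
  have r94 : [a,a,c,B,c,c,B].prod = [C,A,C,A,c].prod := (st r29 [a,a,c,B] []).symm.trans ((st r91 [] [c]))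
  have r95 : [C,A,b,C,A,c].prod = [b,a,c,B,a,B].prod := (st r83 [] [A,c]).symm.trans ((st r56 [a,B,a,B] []).trans ((st r4 [a,B,a] [a,c,A]).trans (r93)))
  have r96 : [B,C,a,c,B,a,B].prod = [A,b,C,A,c].prod := (st r22 [] [a,c,B,a,B]).symm.trans ((st r95 [c] []).symm.trans ((st r5 [] [A,b,C,A,c])))
  have r97 : [C,a,c,B,a,B].prod = [b,A,b,C,A,c].prod := (st r3 [] [C,a,c,B,a,B]).symm.trans ((st r96 [b] []))
  have r98 : [b,A,b,C,b,a,C].prod = [C,a,c,B,a].prod := (st r20 [b,A,b,C] [C]).symm.trans ((st r22 [b,A,b,C,A] []).symm.trans ((st r97 [] [b]).symm.trans ((st r4 [C,a,c,B,a] []))))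
  have r99 : [A,b,C,b,a,C].prod = [B,C,a,c,B,a].prod := (st r4 [] [A,b,C,b,a,C]).symm.trans ((st r98 [B] []))
  have r100 : [a,B,C,a,c,B,a].prod = [b,C,b,a,C].prod := (st r99 [a] []).symm.trans ((st r1 [] [b,C,b,a,C]))
  have r101 : [a,B,C,a,c,B].prod = [b,C,b,a,C,A].prod := (st r1 [a,B,C,a,c,B] []).symm.trans ((st r100 [] [A]))
  have r102 : [c,a,B,c,a,c,A].prod = [B,a,C,a,c,c,a].prod := (st r90 [c,a] []).symm.trans ((st r58 [] [c,c,a]))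
  have r103 : [C,A,C,A,c,A].prod = [a,a,c,c,A,c].prod := (st r94 [] [A]).symm.trans ((st r32 [a,a,c,B,c] []).trans ((st r32 [a,a,c,B] [C]).trans ((st r18 [a,a,c] [A,C,C]).trans ((st r22 [a,a] [b,A,C,C]).trans ((st r19 [a,a,B,C,b,A] []).trans ((st r57 [a,a,B] [c]).trans ((st r4 [a,a] [c,c,A,c]))))))))
  have r104 : [a,B,a,C,b,A,C].prod = [b,C,b,a,C,a,a].prod := (st r59 [a,B] [A,C]).symm.trans ((st r32 [a,B,C,a] []).symm.trans ((st r101 [] [A]).trans ((st r17 [b,C,b,a,C] []))))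
  have r105 : [c,c,B,a,B,c,a].prod = [a,a,c,c,A,c,A].prod := (st r29 [] [a,B,c,a]).symm.trans ((st r45 [C] [B,c,a]).symm.trans ((st r28 [C,A] [c,a]).symm.trans ((st r43 [C,A,C] [a]).symm.trans ((st r17 [C,A,C,A,c] []).symm.trans ((st r103 [] [A]))))))
  have r106 : [B,a,C,a,C,a,c,B].prod = [C,a,C,a,C,A].prod := (st r58 [] [C,a,c,B]).symm.trans ((st r101 [c,a] []).trans ((st r21 [c] [C,b,a,C,A]).trans ((st r32 [] [C,b,a,C,A]).trans ((st r19 [B,A] [b,a,C,A]).trans ((st r41 [] [c,b,a,C,A]).trans ((st r22 [b,c,A] [a,C,A]).trans ((st r20 [b,c] [C,a,C,A]).trans ((st r22 [b] [a,C,a,C,A]).trans ((st r3 [] [C,a,C,a,C,A]))))))))))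
  have r107 : [a,C,a,C,a,c,B].prod = [b,C,a,C,a,C,A].prod := (st r3 [] [a,C,a,C,a,c,B]).symm.trans ((st r106 [b] []))
  have r108 : [b,C,a,C,a,C,A,b].prod = [a,C,a,C,a,c].prod := (st r107 [] [b]).symm.trans ((st r4 [a,C,a,C,a,c] []))
  have r109 : [C,a,C,a,C,A,b].prod = [B,a,C,a,C,a,c].prod := (st r4 [] [C,a,C,a,C,A,b]).symm.trans ((st r108 [B] []))
  have r110 : [b,C,b,a,C,a,a,C].prod = [a,c,A,c,A,c].prod := (st r104 [] [C]).symm.trans ((st r19 [a,B,a,C,b,A] []).trans ((st r57 [a,B,a] [c]).trans ((st r21 [a,B] [c,c,A,c]).trans ((st r18 [a] [A,c,c,A,c]).trans ((st r21 [] [b,A,c,c,A,c]).trans ((st r56 [B] [c,A,c]).trans ((st r4 [] [a,c,A,c,A,c]))))))))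
  have r111 : [C,b,a,C,a,a,C].prod = [B,a,c,A,c,A,c].prod := (st r4 [] [C,b,a,C,a,a,C]).symm.trans ((st r110 [B] []))
  have r112 : [C,a,C,a,C,a,a,B].prod = [B,a,C,a,C,a,c,a].prod := (st r26 [C,a,C,a,C] []).symm.trans ((st r109 [] [a]))
  have r113 : [b,b,a,a,c,A,c,A,c].prod = [a,C,a,C,a,c,a].prod := (st r20 [b] [a,c,A,c,A,c]).symm.trans ((st r111 [b,A] []).symm.trans ((st r84 [] [C,a,a,C]).symm.trans ((st r92 [a,B,A] []).trans ((st r41 [a] [B,C,a,c,a]).trans ((st r21 [] [c,A,B,C,a,c,a]).trans ((st r41 [] [A,B,C,a,c,a]).trans ((st r17 [b,c] [B,C,a,c,a]).trans ((st r58 [b] [C,a,c,a]).trans ((st r3 [] [a,C,a,C,a,c,a]))))))))))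
  have r114 : [B,a,C,a,C,a,c,a].prod = [b,a,a,c,A,c,A,c].prod := (st r113 [B] []).symm.trans ((st r4 [] [b,a,a,c,A,c,A,c]))
  have r115 : [C,a,C,a,C,a,a,B].prod = [b,a,a,c,A,c,A,c].prod := r112.trans (r114)
  have r116 : [b,a,a,B,C,a,C,a,C].prod = [C,a,C,a,C,a,a].prod := (st r22 [b,a,a] [a,C,a,C]).symm.trans ((st r20 [b,a,a,c] [C,a,C]).symm.trans ((st r22 [b,a,a,c,A] [a,C]).symm.trans ((st r20 [b,a,a,c,A,c] [C]).symm.trans ((st r22 [b,a,a,c,A,c,A] []).symm.trans ((st r115 [] [b]).symm.trans ((st r4 [C,a,C,a,C,a,a] [])))))))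
  have r117 : [a,a,B,C,a,C,a,C].prod = [B,C,a,C,a,C,a,a].prod := (st r4 [] [a,a,B,C,a,C,a,C]).symm.trans ((st r116 [B] []))
  have r118 : [b,a,C,a,C,a,C,a,a].prod = [a,B,C,a,C,a,C].prod := (st r20 [] [C,a,C,a,C,a,a]).symm.trans ((st r117 [A] []).symm.trans ((st r2 [] [a,B,C,a,C,a,C])))
  have r119 : [a,C,a,C,a,C,a,a].prod = [B,a,B,C,a,C,a,C].prod := (st r4 [] [a,C,a,C,a,C,a,a]).symm.trans ((st r118 [B] []))
  have r120 : [a,a,c,c,A,c,A,c,A].prod = [C,a,C,a,c,c,a].prod := (st r105 [] [c,A]).symm.trans ((st r29 [] [a,B,c,a,c,A]).symm.trans ((st r102 [C,b] []).trans ((st r3 [C] [a,C,a,c,c,a]))))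
  have r121 : [a,c,c,A,c,A,c,A].prod = [b,c,B,C,a,c,c,a].prod := (st r2 [] [a,c,c,A,c,A,c,A]).symm.trans ((st r120 [A] []).trans ((st r35 [] [C,a,c,c,a])))
  have r122 : [C,a,C,a,C,a,c,a].prod = [A,C,A,c,A,c,A,c].prod := (st r113 [C] []).symm.trans ((st r28 [] [a,a,c,A,c,A,c]).trans ((st r50 [b] [c,A,c,A,c]).trans ((st r3 [] [A,C,A,c,A,c,A,c]))))
  have r123 : [A,C,A,c,A,c,A,c,A].prod = [C,a,C,a,C,a,c].prod := (st r122 [] [A]).symm.trans ((st r1 [C,a,C,a,C,a,c] []))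
  have r124 : [C,A,c,A,c,A,c,A].prod = [a,C,a,C,a,C,a,c].prod := (st r1 [] [C,A,c,A,c,A,c,A]).symm.trans ((st r123 [a] []))
  have r125 : [A,c,c,A,c,A,c,A].prod = [a,C,a,C,a,c,c,a].prod := (st r12 [] [c,c,A,c,A,c,A]).symm.trans ((st r121 [a,a] []).trans ((st r21 [a] [c,B,C,a,c,c,a]).trans ((st r41 [a] [B,C,a,c,c,a]).trans ((st r21 [] [c,A,B,C,a,c,c,a]).trans ((st r41 [] [A,B,C,a,c,c,a]).trans ((st r17 [b,c] [B,C,a,c,c,a]).trans ((st r58 [b] [C,a,c,c,a]).trans ((st r3 [] [a,C,a,C,a,c,c,a])))))))))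
  have r126 : [C,a,C,a,C,a,C,a,c].prod = [c,c,A,c,A,c,A,c,A].prod := (st r124 [C] []).symm.trans ((st r19 [] [A,c,A,c,A,c,A]))
  have r127 : [a,C,a,C,a,c,c,a,B].prod = [b,C,a,C,a,C,a,C,a].prod := (st r125 [] [B]).symm.trans ((st r20 [A,c,c,A,c,A,c] []).trans ((st r22 [A,c,c,A,c,A] [a]).trans ((st r20 [A,c,c,A,c] [C,a]).trans ((st r22 [A,c,c,A] [a,C,a]).trans ((st r20 [A,c,c] [C,a,C,a]).trans ((st r22 [A,c] [a,C,a,C,a]).trans ((st r39 [] [C,a,C,a,C,a]))))))))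
  have g1 : [C,a,C,a,C,a,C,a,a].prod = [a,a,C,a,C,a,C,a,C].prod := (st r119 [C] []).trans ((st r24 [] [a,B,C,a,C,a,C]).trans ((st r51 [] [C,a,C,a,C]).symm))
  have g2 : [a,C,a,C,a,C,a,C,b].prod = [b,C,a,C,a,C,a,C,a].prod := (st r60 [a,C,a,C,a] []).trans (r127)
  have g3 : [C,a,C,a,C,a,C,a,b].prod = [b,c,A,c,A,c,A,c,A].prod := (st r21 [C,a,C,a,C,a,C] []).trans ((st r24 [C,a,C,a,C,a] [A]).trans ((st r21 [C,a,C,a,C] [c,A]).trans ((st r24 [C,a,C,a] [A,c,A]).trans ((st r21 [C,a,C] [c,A,c,A]).trans ((st r24 [C,a] [A,c,A,c,A]).trans ((st r21 [C] [c,A,c,A,c,A]).trans ((st r24 [] [A,c,A,c,A,c,A]))))))))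
  have g4 : [C,a,C,a,C,a,C,a,c].prod = [c,c,A,c,A,c,A,c,A].prod := r126
  exact ⟨g1, g2, g3, g4⟩

theorem Urel {r : FreeGroup (Fin 3)} (h : r ∈ Urels) : (PresentedGroup.mk Urels r) = 1 :=
  PresentedGroup.one_of_mem h

/-- The conjugation relations for `x` and `y` in `U`. -/
theorem conj_relations_xy :
    Ua⁻¹ * Ux * Ua = Uy ∧ Ub⁻¹ * Ux * Ub = Uy ∧ Uc⁻¹ * Ux * Uc = Uy ∧
    Ua⁻¹ * Uy * Ua = Ux ∧ Ub⁻¹ * Uy * Ub = Ux⁻¹ ∧ Uc⁻¹ * Uy * Uc = Ux⁻¹ := by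
  have h1 : Ua ^ 4 = 1 := Urel (r := (FreeGroup.of 0) ^ 4) (by simp [Urels])
  have h2 : Ub ^ 4 = 1 := Urel (r := (FreeGroup.of 1) ^ 4) (by simp [Urels])
  have h3 : Uc ^ 4 = 1 := Urel (r := (FreeGroup.of 2) ^ 4) (by simp [Urels])
  have h4 : (Ua * Ub) ^ 2 = 1 :=
    Urel (r := (FreeGroup.of 0 * FreeGroup.of 1) ^ 2) (by simp [Urels])
  have h5 : (Ub * Uc) ^ 2 = 1 :=
    Urel (r := (FreeGroup.of 1 * FreeGroup.of 2) ^ 2) (by simp [Urels])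
  have h6 : (Ua * Ub * Uc) ^ 2 = 1 :=
    Urel (r := (FreeGroup.of 0 * FreeGroup.of 1 * FreeGroup.of 2) ^ 2) (by simp [Urels])
  have h7 : (Ua ^ 2 * Ub ^ 2) ^ 4 = 1 :=
    Urel (r := ((FreeGroup.of 0) ^ 2 * (FreeGroup.of 1) ^ 2) ^ 4) (by simp [Urels])
  have h8 : Ua ^ 2 * Uc ^ 2 * Ub ^ 2 * (Ua * Uc) ^ 2 = 1 :=
    Urel (r := (FreeGroup.of 0) ^ 2 * (FreeGroup.of 2) ^ 2 * (FreeGroup.of 1) ^ 2 *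
     (FreeGroup.of 0 * FreeGroup.of 2) ^ 2) (by simp [Urels])
  have h9 : Ua⁻¹ * Uc * Ua * Uc⁻¹ * Ub ^ 2 = 1 :=
    Urel (r := (FreeGroup.of 0)⁻¹ * FreeGroup.of 2 * FreeGroup.of 0 * (FreeGroup.of 2)⁻¹ *
     (FreeGroup.of 1) ^ 2) (by simp [Urels])
  unfold Ux Uy
  generalize Ua = a at *
  generalize Ub = b at *
  generalize Uc = c at *
  simp only [pow_succ, pow_zero, one_mul, mul_assoc] at h1 h2 h3 h4 h5 h6 h7 h8 h9
  obtain ⟨g1, g2, g3, g4⟩ := key a a⁻¹ b b⁻¹ c c⁻¹ (by simp) (by simp) (by simp) (by simp)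
    (by simp) (by simp)
    (by simpa only [List.prod_cons, List.prod_nil, mul_one] using h1)
    (by simpa only [List.prod_cons, List.prod_nil, mul_one] using h2)
    (by simpa only [List.prod_cons, List.prod_nil, mul_one] using h3)
    (by simpa only [List.prod_cons, List.prod_nil, mul_one] using h4)
    (by simpa only [List.prod_cons, List.prod_nil, mul_one] using h5)
    (by simpa only [List.prod_cons, List.prod_nil, mul_one] using h6)
    (by simpa only [List.prod_cons, List.prod_nil, mul_one] using h7)
    (by simpa only [List.prod_cons, List.prod_nil, mul_one] using h8)
    (by simpa only [List.prod_cons, List.prod_nil, mul_one] using h9)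
  simp only [List.prod_cons, List.prod_nil, mul_one] at g1 g2 g3 g4
  simp only [pow_succ, pow_zero, one_mul, mul_assoc, mul_inv_rev, inv_inv]
  refine ⟨?_, ?_, ?_, ?_, ?_, ?_⟩
  · simp
  · rw [inv_mul_eq_iff_eq_mul]; exact g2
  · simp
  · rw [inv_mul_eq_iff_eq_mul]; exact g1
  · rw [inv_mul_eq_iff_eq_mul]; exact g3
  · rw [inv_mul_eq_iff_eq_mul]; exact g4
end

section
/- For every positive integer m, the subgroup N_m = ⟨x^m, y^m⟩ of U generated by x^m = (ac^{-1})^{4m} and y^m = (c^{-1}a)^{4m} is a normal subgroup of U of index |U : N_m| = 1024 m^2. -/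
/-- The subgroup `N_m = ⟨x^m, y^m⟩` of `U`. -/
def UN (m : ℕ) : Subgroup UGroup := Subgroup.closure {Ux ^ m, Uy ^ m}

namespace UProof

/-! ### A small verified checker for word identities -/

/-- Decode the decimal digits of a number (after the leading sentinel digit) into a word. -/
def decF : ℕ → ℕ → List ℕ → List ℕ
  | 0, _, acc => acc
  | f + 1, n, acc => bif Nat.blt n 2 then acc else decF f (n / 10) ((n % 10) :: acc)

def dec (n : ℕ) : List ℕ := decF 60 n []

def strip : List ℕ → List ℕ → Option (List ℕ)
  | [], w => some w
  | _ :: _, [] => none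
  | l :: ls, c :: w => bif Nat.beq l c then strip ls w else none

def app (l r : List ℕ) : ℕ → List ℕ → List ℕ
  | 0, w => match strip l w with
    | some t => r ++ t
    | none => w
  | _ + 1, [] => []
  | n + 1, c :: w => c :: app l r n w

def eqw : List ℕ → List ℕ → Bool
  | [], [] => true
  | a :: s, b :: t => Nat.beq a b && eqw s t
  | _, _ => false

abbrev Rule := List ℕ × List ℕ

def stepR (R : List Rule) (s : ℕ) (w : List ℕ) : List ℕ :=
  let p := R.getD (s / 100) ([], [])
  bif Nat.beq (s % 2) 0 then app p.1 p.2 (s % 100 / 2) w else app p.2 p.1 (s % 100 / 2) w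

def steps (R : List Rule) : List ℕ → List ℕ → List ℕ
  | [], w => w
  | s :: ss, w => steps R ss (stepR R s w)

def run (R : List Rule) : List (ℕ × ℕ × List ℕ) → List Rule
  | [] => R
  | (u, v, st) :: rest =>
    bif eqw (steps R st (dec u)) (dec v) then run ((dec u, dec v) :: R) rest else R

def hasR (u v : List ℕ) : List Rule → Bool
  | [] => false
  | p :: R => (eqw u p.1 && eqw v p.2) || hasR u v R

section sound
variable {G : Type*} [Group G] (g : ℕ → G)

def ev : List ℕ → G
  | [] => 1
  | c :: w => g c * ev w

theorem ev_append (u v : List ℕ) : ev g (u ++ v) = ev g u * ev g v := by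
  induction u with
  | nil => simp [ev]
  | cons c u ih => simp [ev, ih, mul_assoc]

theorem strip_eq : ∀ (l w t : List ℕ), strip l w = some t → w = l ++ t
  | [], w, t, h => by simpa [strip] using h
  | _ :: _, [], t, h => by simp [strip] at h
  | l :: ls, c :: w, t, h => by
    rw [strip] at h
    cases hb : Nat.beq l c with
    | false => simp [hb] at h
    | true =>
      rw [hb] at h
      have := strip_eq ls w t h
      have h2 := Nat.eq_of_beq_eq_true hb
      simp [this, h2]

theorem app_ev (l r : List ℕ) (h : ev g l = ev g r) :
    ∀ (n : ℕ) (w : List ℕ), ev g (app l r n w) = ev g w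
  | 0, w => by
    rw [app]
    cases hs : strip l w with
    | none => rfl
    | some t =>
      have := strip_eq l w t hs
      simp only [this, ev_append, h]
  | n + 1, [] => by simp [app]
  | n + 1, c :: w => by simp [app, ev, app_ev l r h n w]

theorem eqw_eq : ∀ (u v : List ℕ), eqw u v = true → u = v
  | [], [], _ => rfl
  | a :: s, b :: t, h => by
    simp only [eqw, Bool.and_eq_true] at h
    rw [Nat.eq_of_beq_eq_true h.1, eqw_eq s t h.2]
  | [], _ :: _, h => by simp [eqw] at h
  | _ :: _, [], h => by simp [eqw] at h

def Valid (R : List Rule) : Prop := ∀ p ∈ R, ev g p.1 = ev g p.2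

theorem getD_valid {R : List Rule} (hR : Valid g R) (n : ℕ) :
    ev g (R.getD n ([], [])).1 = ev g (R.getD n ([], [])).2 := by
  by_cases h : n < R.length
  · rw [List.getD_eq_getElem _ _ h]
    exact hR _ (List.getElem_mem h)
  · rw [List.getD_eq_default _ _ (not_lt.mp h)]

theorem stepR_ev {R : List Rule} (hR : Valid g R) (s : ℕ) (w : List ℕ) :
    ev g (stepR R s w) = ev g w := by
  unfold stepR
  have := getD_valid g hR (s / 100)
  cases Nat.beq (s % 2) 0
  · exact app_ev g _ _ this.symm _ _
  · exact app_ev g _ _ this _ _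

theorem steps_ev {R : List Rule} (hR : Valid g R) (st : List ℕ) :
    ∀ w, ev g (steps R st w) = ev g w := by
  induction st with
  | nil => intro w; rfl
  | cons s ss ih => intro w; rw [steps, ih, stepR_ev g hR]

theorem run_valid (C : List (ℕ × ℕ × List ℕ)) :
    ∀ R : List Rule, Valid g R → Valid g (run R C) := by
  induction C with
  | nil => intro R h; exact h
  | cons x rest ih =>
    obtain ⟨u, v, st⟩ := x
    intro R h
    rw [run]
    cases hb : eqw (steps R st (dec u)) (dec v) with
    | false => exact h
    | true =>
      apply ih
      intro p hp
      rcases List.mem_cons.mp hp with rfl | hp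
      · have := steps_ev g h st (dec u)
        rw [eqw_eq _ _ hb] at this
        exact this.symm
      · exact h p hp

theorem hasR_ev (u v : List ℕ) : ∀ R : List Rule, Valid g R → hasR u v R = true →
    ev g u = ev g v
  | [], _, h => by simp [hasR] at h
  | p :: R, hR, h => by
    simp only [hasR, Bool.or_eq_true, Bool.and_eq_true] at h
    rcases h with h | h
    · rw [eqw_eq _ _ h.1, eqw_eq _ _ h.2]; exact hR p (by simp)
    · exact hasR_ev u v R (fun q hq => hR q (by simp [hq])) h

end sound

/-! ### Certificates -/

def R0 : List Rule := [
  ([5,0], [8]), ([0,5], [6]), ([9,8], []), ([8,9], []), ([7,6], []), ([6,7], []), ([1,4,0,5,2,2], []),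
  ([0,0,4,4,2,2,0,4,0,4], []), ([0,0,2,2,0,0,2,2,0,0,2,2,0,0,2,2], []), ([0,2,4,0,2,4], []), ([2,4,2,4], []),
  ([0,2,0,2], []), ([4,4,4,4], []), ([2,2,2,2], []), ([0,0,0,0], []), ([5,4], []), ([4,5], []), ([3,2], []),
  ([2,3], []), ([1,0], []), ([0,1], [])]

def R0Q : List Rule := ([6, 6, 6, 6], []) :: R0

def R1Q : List Rule := ([8, 8, 8, 8], []) :: R0Q

def certU : List (ℕ × ℕ × List ℕ) := [
  (116,15,[103,1900]), (164,10,[201,1602]), (181,15,[201,2202]), (148,10,[303,1900]), (157,11,[301,902]),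
  (170,14,[303,900]), (195,11,[303,800]), (109,14,[301,1002]), (141,17,[303,2400]), (114,19,[201,2402]),
  (156,185,[1103,1000]), (108,160,[1103,1200]), (117,191,[501,702]), (149,174,[701,502]),
  (1000,11,[3407,2800]), (1222,13,[3307,2800]), (1444,15,[3207,2800]), (1020,13,[3507,2800]),
  (1424,13,[3501,2802]), (111,100,[401,3904]), (133,122,[401,3804]), (124,153,[3601,202]),
  (1006,115,[2305,700]), (1800,151,[2301,802]), (1400,171,[1801,902]), (1004,119,[1705,1000]),
  (1044,165,[2401,902]), (1440,158,[2305,1000]), (1447,151,[1905,1100]), (139,163,[1101,2104,702,3000]),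
  (1263,19,[3,4800]), (1638,13,[101,3302]), (126,192,[4905,100]), (138,173,[3701,102]), (1927,12,[101,3902]),
  (127,182,[3801,2]), (16363,1,[3705,1407,3701,1403,4500]), (1636,12,[5407,0]), (182,163,[201,1,4304]),
  (1622,18,[1803,1,5702]), (1963,12,[103,4200]), (183,162,[101,5904]), (122,178,[4601,202]),
  (196,178,[6005,200,0]), (1787,19,[1,4902]), (187,169,[5001,2]), (1078,146,[203,3800]),
  (1690,184,[101,4102]), (1515,1806,[2503,4800]), (1406,1715,[4301,2602]), (1519,1804,[2601,4204]),
  (1040,1658,[4705,2400]), (1194,1065,[2601,2502]), (1580,1471,[2501,2802]), (1151,1947,[2503,4400]),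
  (128,193,[1503,2200,1202,1604,5902]), (1478,1746,[1203,4200]), (1069,1607,[1103,4500]),
  (1075,1461,[5505,1100]), (10074,1199,[4505,3300]), (18590,1584,[4901,1202]), (14715,1586,[1103,3300]),
  (10460,16588,[5005,1000]), (11591,19477,[5005,800]), (11806,19475,[1503,900]), (15947,18061,[1003,1600]),
  (11804,19479,[1503,1100]), (14607,17159,[903,1700]), (160747904,1,[1001,105,6305,2507,1501,4201,7500]),
  (16074790,15,[8515,0]), (10747904,17,[7401,102]), (1607479,151,[9113,100]), (1747904,191,[9101,102,5900]),
  (107479,1751,[7701,102]), (160747,1518,[7611,200]), (147904,1691,[8001,202]),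
  (19947,17479,[2103,6301,203,9500]), (15186,16074,[201,8108]), (18591,17904,[6701,203,9300]),
  (174778,1994,[3507,201,8306]), (171594,1186,[1201,203,9600]), (177858,1859,[3703,2905,201,10006]),
  (19974,17477,[6805,201,8508]), (11594,16186,[8801,202]), (17858,16859,[8901,202]),
  (169477,1974,[3901,203,8800]), (106186,1594,[203,10600]), (166859,1858,[203,9200]),
  (19477,17974,[9201,202]), (10618,18061,[9409,200,2300]), (18588,16685,[201,9208]),
  (194751,1618,[2601,103,11000]), (178685,1588,[4801,103,9400]), (14751,18618,[9601,102]),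
  (18685,16588,[9901,102]), (158618,1751,[103,11000]), (15861,17804,[9909,0,4502]),
  (174604,1861,[4001,3,11300]), (14604,16861,[10301,2]), (119979,14600,[3901,2502,4000,7904]),
  (166584,18471,[3905,1200,4602]), (165880,18688,[601,10106]), (168600,17159,[8207,301,9306,3400]),
  (19979,18688,[12301,302,4000,100]), (188688,1979,[3,10700]), (186888,1997,[101,10706]),
  (19799,18868,[101,10908]), (19997,16888,[103,10900]), (188868,1799,[103,11100]), (168886,1999,[101,11306]),
  (18886,17999,[11309,100]), (18586,16658,[4903,1001,12708]), (177974,16860,[2303,4803,901,13208]),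
  (17797,16866,[12909,0,11406]), (166866,1797,[3,11900]), (17977,16686,[1,12008]), (166686,1977,[3,12100]),
  (19777,16668,[1,12208]), (1666658,15999,[605,2701,10701,802]), (159999,166665,[1,12210]),
  (1466665,19999,[3,13600]), (146666,199994,[13611,0]), (108888,166660,[11000,11002,11004,11006]),
  (126666,199992,[9000,9002,9004,9006]), (128888,166662,[6800,9002,9004,9006,600,8206]),
  (146666,199994,[300]), (166668888,188886666,[1807,8213,8005,1507,1803,8209,8001,1503])]

def tgtU : List Rule := [
  ([0,8,8,8,8], [6,6,6,6,0]), ([2,6,6,6,6], [9,9,9,9,2]), ([2,8,8,8,8], [6,6,6,6,2]),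
  ([4,6,6,6,6], [9,9,9,9,4]), ([6,6,6,6,8,8,8,8], [8,8,8,8,6,6,6,6])]

set_option maxRecDepth 20000 in
def certQ : List (ℕ × ℕ × List ℕ) := [
  (116,15,[303,2100]), (164,10,[401,1802]), (181,15,[401,2402]), (148,10,[503,2100]), (157,11,[301,1102]),
  (170,14,[303,1100]), (195,11,[303,1000]), (109,14,[301,1202]), (141,17,[303,2600]), (114,19,[201,2602]),
  (156,185,[1303,1200]), (160,108,[1401,1302]), (191,117,[703,500]), (174,149,[503,700]),
  (1000,11,[3607,3000]), (1222,13,[3507,3000]), (1444,15,[3407,3000]), (1202,11,[3801,3002]),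
  (1020,13,[3807,3100]), (1424,13,[3801,3102]), (1242,15,[3807,3200]), (1666,17,[2807,2200]),
  (1888,19,[2707,2200]), (111,100,[801,4504]), (133,122,[801,4404]), (155,144,[801,4304]),
  (113,120,[801,4604]), (131,102,[903,4600]), (135,142,[801,4604]), (153,124,[903,4600]),
  (177,166,[801,3704]), (199,188,[801,3604]), (1085,166,[2103,3500]), (1006,115,[3605,1800]),
  (1800,151,[3601,1902]), (1400,171,[2901,2002]), (1004,119,[2805,2100]), (1044,165,[3501,2002]),
  (1440,158,[3405,2100]), (1447,151,[3005,2200]), (1944,115,[3001,2302]), (1026,142,[4405,2200,1200]),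
  (1820,124,[4401,2302,1200]), (1420,173,[3701,2402]), (1024,139,[3605,2500]), (139,163,[1,4301,2502]),
  (1263,19,[3,6600]), (1638,13,[101,5102]), (192,126,[101,6704]), (173,138,[103,5500]), (1826,12,[103,5500]),
  (182,127,[5805,0]), (1427,102,[4305,3200,2400]), (1885,117,[4203,4201,5201,3102]),
  (1088,149,[4201,4203,5205,3200,4000]), (16229,1,[3003,1005,901,1001,6600]), (1229,17,[6201,2]),
  (1622,18,[6107,100]), (137,129,[103,7700]), (178,122,[201,6304]), (163,127,[1401,4401,302]),
  (183,162,[301,8104]), (1296,13,[301,6802]), (1227,19,[203,1600]), (1272,16,[301,8302]),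
  (196,122,[8401,202,4000]), (187,169,[801,202]), (172,136,[8601,202]), (1221,175,[6105,1100]),
  (1522,118,[6801,1102]), (1290,134,[1101,6402]), (1127,124,[1003,7000,4100]), (1462,103,[1003,6800]),
  (1224,190,[6705,900]), (1022,146,[2101,902]), (1690,184,[801,6902]), (1246,112,[4601,803,7100]),
  (1275,102,[803,6100,4900]), (1902,125,[401,5702]), (1302,175,[103,9800]), (193,128,[6103,100,8202]),
  (1028,143,[3,7300]), (1243,118,[3,6400]), (1122,1203,[6501,6704]), (1300,1021,[6501,6904]),
  (1120,1003,[7001,6604]), (1344,1425,[6601,6904]), (1524,1443,[7001,6704]), (1342,1225,[7201,6704]),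
  (1900,1171,[6503,7600]), (1585,1446,[7903,6400]), (1385,1426,[8003,6200]), (1515,1806,[5803,9400]),
  (1715,1406,[5903,8700]), (1519,1804,[5901,8604]), (1719,1404,[5901,8704]), (1658,1040,[5801,9204]),
  (1651,1047,[5901,8804]), (1194,1065,[6101,6002]), (1940,1158,[8901,6002]), (1580,1471,[6101,6402]),
  (1947,1151,[9101,6102]), (1271,1027,[4101,5601,5701,9304]), (1388,1279,[7103,5700,4200]),
  (1627,1279,[4303,5605,8200,5400,0]), (1529,1247,[8401,4804]), (1802,1621,[4801,8804]),
  (1842,1625,[4901,8604]), (1362,1668,[4001,8601,5004]), (1349,1294,[9503,5000]), (1366,1297,[7903,5100]),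
  (1527,1249,[5003,10000,8102,5900,9702]), (12662,186,[8103,6001,4702]), (1908,1220,[10103,4700]),
  (1886,1262,[8201,4802,6500]), (1849,1694,[10103,4800]), (1866,1697,[8503,4900]),
  (1386,1662,[6701,4903,8600]), (1124,1240,[11205,4600]), (1590,1184,[4503,4900]), (1461,1075,[4501,5102]),
  (1906,1212,[4701,4402]), (1402,1025,[4403,6900]), (1942,1285,[8103,4400,11202]), (1946,1252,[4903,4500]),
  (1752,1346,[4501,5002]), (1862,1268,[6403,9401,4502,7700]), (1943,1258,[4503,4800]),
  (1758,1343,[4801,4602]), (1903,1218,[5501,4602]), (14258,1340,[9105,11000]), (14251,1347,[9105,11100]),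
  (14466,1517,[10105,9200]), (14422,1518,[7305,9300]), (12285,1717,[7401,8002]),
  (12790,1624,[8301,6402,7300]), (16684,1790,[2701,6801,6202]), (16212,1846,[6005,7900]),
  (1712,1306,[6103,7000,13602]), (12002,1175,[6105,12100]), (12665,1621,[10903,8801,6202,3300]),
  (12442,1185,[11205,5800]), (1718,1303,[5903,7400,14002]), (10471,1680,[4203,14600]),
  (12949,1308,[13005,3301,14204,13202]), (14262,1086,[10301,3202]), (16949,1808,[13205,2901,14404,13402]),
  (16624,1380,[2901,14504]), (10212,1406,[2603,14000]), (10252,1446,[2601,7402]),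
  (12443,1158,[6203,2501,14804,5000]), (12446,1152,[12101,2503,14600]), (12086,1852,[603,13100,14100]),
  (15185,18066,[11801,12004]), (13042,14066,[12505,1101,11801,12104]), (15844,14465,[11601,11704]),
  (12404,10279,[11301,11904,10400,5300]), (13806,14215,[10701,11301,12304]),
  (13804,14219,[10801,11401,12104]), (13844,14265,[10901,11501,12104]),
  (16217,14430,[5301,9905,11405,11505,12500,4102,7200]), (16249,10025,[4903,12301,10804,3802]),
  (13038,14049,[1901,12601,10704]), (13404,12179,[9201,12604,15002]), (16852,10403,[15303,12601,9104]),
  (19040,12258,[9101,12604]), (13062,14046,[2701,13001,9104]), (18404,16179,[9101,13004,15402]),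
  (19075,12521,[9905,8900]), (13068,14043,[3001,13301,8704]), (14426,10217,[7803,8801,11604]),
  (15218,11843,[8805,10100]), (16615,14212,[14101,7802,15800,5002]), (16806,10475,[8003,7500]),
  (16804,10479,[7903,7600]), (13471,14280,[7403,14600]), (11751,18847,[16301,7403,14400]),
  (11520,12588,[15005,7501,12704,4900]), (11518,12852,[7601,11804,5400]),
  (12661,14430,[14803,12701,7602,7200,1800]), (12794,10025,[7501,16604,1800]), (15288,12479,[14905,7500]),
  (18521,14306,[17101,7503,8100,4302]), (18697,12626,[6603,6800]), (15184,14490,[6403,15800]),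
  (15171,11840,[9503,6500]), (11285,10652,[6203,8700]), (13846,16652,[13701,6103,15600]),
  (18843,12040,[15601,6002,13900,9102]), (13430,14971,[6001,8802,17500]), (19042,12185,[16105,6000]),
  (18803,12618,[15901,6102,14200]), (11790,18584,[5503,19100,18100]), (16612,14215,[16201,5402,14300,3500]),
  (14265,10621,[15201,5302]), (11852,12518,[5301,6102]), (13803,16618,[14601,5303,16500]),
  (11971,10680,[16001,5302]), (18443,12080,[11003,18701,19701,5002,17100]), (11586,12512,[9901,5003,12000]),
  (19043,12158,[12601,4902]), (11526,12517,[4901,6802]), (142612,1615,[15303,18801,2903,20800]),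
  (120840,1843,[19103,15401,1403,20700]), (144308,1803,[2401,15501,1203,20800]),
  (16240,14261,[8603,17505,201,22508]), (13043,14068,[12405,12100,5700]), (144340,15258,[11901,16804]),
  (144343,18068,[7905,16800,11500]), (106200,13847,[18507,1401,16003,19501,7702,15900]),
  (100259,16208,[2901,15801,6502,14800]), (120808,18520,[19907,5800]), (100217,16526,[4103,17400]),
  (104794,16865,[3801,17504]), (144294,18038,[10405,15907,900]), (106180404,1,[14505,11601,17801,22400]),
  (16180404,11,[23701,2]), (10618040,15,[23515,100]), (1618040,115,[23613,100]), (1180404,171,[22501,202]),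
  (1061804,151,[24213,200]), (161804,1151,[24311,200]), (118040,1406,[22801,302,12800]),
  (180404,1071,[24501,302]), (106180,1806,[24211,300,13100]), (11806,16180,[13203,301,24308]),
  (11804,14061,[23201,402,13200]), (18040,10406,[24901,402]), (19071,10404,[403,23200]),
  (18061,10618,[401,25108]), (161807,1180,[401,23706]), (104061,1804,[403,25300]), (140615,1180,[501,25006]),
  (122586,1040,[6701,503,23700]), (104040,1907,[501,25506]), (121218,1061,[11301,503,23900]),
  (13030,11807,[9301,503,24200]), (15180,10615,[403,25400]), (12258,10407,[24509,400]),
  (12040,14286,[503,22300,21000]), (18586,10840,[18201,602,22800]), (13061,11218,[503,26000]),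
  (12121,10619,[24709,600]), (118071,1303,[601,26506]), (121807,1030,[703,26400]), (106151,1518,[701,26706]),
  (104079,1225,[701,25106]), (108407,1858,[23501,803,18900]), (142861,1204,[801,27006]),
  (106190,1212,[601,27006]), (18071,10303,[27201,602]), (12180,10306,[25709,600]),
  (16151,12852,[27301,602,7300]), (12042,14079,[22405,16901,603,27400]),
  (16259,12858,[14601,19505,5001,602]), (15204,12861,[603,27200]), (11212,16190,[603,27700]),
  (128520,1615,[401,27806]), (140368,1204,[19005,17707,401,27806]), (136858,1259,[19101,403,26500]),
  (128588,1625,[501,26406]), (161218,1121,[13105,401,28106]), (13615,18520,[403,28100]),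
  (16152,12851,[501,24506]), (12861,10368,[801,503,28100]), (12049,14036,[601,27008]),
  (16858,12259,[28601,602]), (13685,12588,[27209,700,23504]), (18588,16685,[28701,702,15900]),
  (16258,12859,[801,24606]), (11219,16121,[801,27508]), (103680,1286,[601,29206]), (130368,1861,[703,29100]),
  (104036,1294,[703,25400,16300]), (125884,1368,[601,29106]), (122685,1588,[20901,603,27900]),
  (106121,1219,[503,29800]), (13680,11286,[29801,502]), (13036,18619,[28309,500]),
  (12151,10403,[17703,501,28608]), (15884,12268,[29901,502,25500]), (12685,14288,[30001,502,25200]),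
  (18685,10408,[22401,602,18500]), (121286,1680,[503,30300]), (186197,1303,[501,29106]),
  (104030,1215,[501,30606]), (142268,1884,[503,30400]), (142884,1268,[501,30406]), (104084,1868,[501,30506]),
  (16807,12128,[501,29608]), (16197,12803,[29401,502,20900]), (11215,14030,[503,31200]),
  (18694,14226,[17603,501,29708]), (136128,1807,[22501,303,29900]), (140304,1121,[201,31106]),
  (142265,1869,[201,31306]), (16128,12807,[31601,202]), (15121,10304,[203,31400]), (15265,12869,[27701,202]),
  (10497904,17,[28909,10903,17003,17801,29301,8302]), (1497904,117,[32101,2]), (149790,1175,[31911,0]),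
  (18847,14979,[12501,1,32408]), (19790,15175,[32001,102]), (194979,1847,[103,30800]),
  (19497,16252,[30909,0,24504,19700]), (162526,1949,[1,31206]), (186180,1475,[30901,8202,20600,30604]),
  (104046,12521,[7901,30706,13900]), (122594,11847,[4201,11603,14101,31101,7402,18900]),
  (17907,15840,[7503,30400,27100]), (140840,1686,[7003,30700,31400]), (18680,10686,[2301,2]),
  (112184,13069,[7101,30306]), (108619,18075,[30201,7103,17600,19302]), (103069,12184,[6301,30706]),
  (140797,1175,[6201,26304,17600]), (15175,10797,[3,33400]), (106528,15259,[13101,6303,31700]),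
  (130808,12615,[30707,30703,25101,29203,25105,18401,6102]), (128517,16244,[26607,5900,29404]),
  (140468,12625,[15401,18201,26105,18601,6002]), (185200,13618,[5901,32406]),
  (112808,13047,[31107,4501,28804,22502]), (180865,11807,[31203,22505,4501,32206,8700]),
  (16268,14384,[3703,32300,24300]), (120304,10868,[24201,21203,28901,3702]),
  (122626,15261,[14303,2801,32206]), (107979,19794,[1001,2401,32006]), (166252,18069,[2303,18200,26204]),
  (152526,10659,[32901,2302,23100]), (12594,14347,[35001,2102,30300,24900]), (134347,1594,[3,35100]),
  (143475,1259,[101,35106]), (13434,15252,[34009,100,20902]), (13475,15259,[35201,102]),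
  (125252,1434,[103,35600]), (125259,1475,[103,35700]), (12525,14343,[35809,100]),
  (118475,12259,[2901,35708]), (121847,14294,[3003,32400,31100]), (125840,16247,[3003,20500]),
  (106865,18686,[2901,34506]), (115259,16528,[2403,36400]), (152625,10468,[2203,36100]),
  (140619,18086,[11801,33107,2001,36208]), (119794,17979,[1703,36700]),
  (104759,13652,[17301,1703,32500,27900]), (142252,12184,[25903,28807,1601,34406,22802]),
  (144280,12597,[17303,1701,34006]), (121843,14225,[17803,28007,1300,26102]), (120659,14346,[2003,1400]),
  (144659,10475,[20201,1402]), (144971,12528,[16303,1401,35506]), (18475,14659,[37601,1402,27900]),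
  (146594,1847,[1,37206]), (15847,16594,[3,37300]), (165252,1584,[23205,1,36306]), (15843,16525,[1,37808]),
  (146525,1843,[3,37700]), (18434,14652,[1,37708]), (162471,12584,[1901,38308]),
  (162479,11525,[18003,1801,36608]), (104684,15262,[1801,38008]), (108086,18049,[1803,13200]),
  (136528,10475,[1701,36908]), (125971,14428,[1601,38808]), (104346,13659,[1503,34800]),
  (142528,15971,[1403,35100]), (144252,11584,[34301,36801,1102]),
  (125206,14684,[34305,30207,16801,603,39100]), (120475,16528,[503,39100]),
  (180684,14252,[27901,27203,27605,301,37708]), (146847,12520,[201,38008]), (165284,12047,[201,39108]),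
  (152520,16847,[103,39200]), (130847,15284,[36403,30801,103,38200]), (129751,15284,[26601,27904,36502,0]),
  (152840,12975,[1,39908]), (142975,12840,[3,39700]), (126179,14297,[21203,1,39708]),
  (165258,104340,[34301,25004]), (115251,126594,[34101,25004,25400,2502]),
  (166188,149049,[18601,33301,22002,36900]), (118594,128038,[37303,26805,28401,22103,30300]),
  (190494,125215,[37105,35907,21600]), (17979,18686,[3901,34901,17202,4300]), (168686,1979,[3,39400]),
  (19797,16868,[1,39508]), (118038,128594,[17403,37900,26500]), (190490,104907,[37605,15501,15504]),
  (1061851,18518,[16101,14502]), (122526,16208,[34307,12501,34006,22700,33306,26902,18100]),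
  (1061261,12619,[34407,15001,27101,11602,34400]), (166280,140436,[27601,34401,11602,25500,22400]),
  (130475,112697,[22103,11700,27804]), (161262,128038,[34705,33607,10500]),
  (128075,108652,[10001,21002,38500]), (162807,142158,[10103,20400]),
  (186521,14346,[39805,29207,9100,27302]), (128038,144907,[1501,33001,9002,21500]),
  (136184,143069,[33301,39201,8702]), (180494,108080,[38805,37607,8701,39508,37806,39004]),
  (143069,108652,[22001,25001,8802,500]), (121840,103084,[8801,32806]), (144217,106244,[37603,32301,8402]),
  (112694,140662,[29005,35107,8200,34606,25100]), (121844,142158,[40109,6600,30704]),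
  (180662,142184,[25401,27401,5902]), (168449,11975,[38305,39803,37101,5602,37200]),
  (185206,128049,[19801,4502]), (126185,142188,[40007,9101,4602,25200,37906]),
  (128066,144218,[25803,21601,40103,30405,4201,34206]), (142179,104297,[37101,3202]),
  (118518,161851,[2203,43500]), (112619,161261,[2103,43600]), (1422512,16280,[21605,21503,40201,2103,42200]),
  (1406621,112697,[26201,34806,2100]), (1403084,134661,[1303,23205,28600,38704]),
  (1442158,180380,[31907,20400]), (1042521,122518,[11105,18500,40604,35406,22900,22402]),
  (134661,106652,[29501,9303,35300,31200,29404,9502,41900,23302]), (1442184,12518,[7305,40500,35200,22600]),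
  (180380,103807,[301,2403,35000]), (1042188,142185,[1203,38200]), (14242,1,[40500,44400]),
  (1443442,1424434,[33904,40900,9101,40601]), (144344434,1,[34004,41000,44404,44702,44400]),
  (15242,1443452,[34000,44704,44705,44607]), (1524434,14252,[34100,22000,5600]),
  (15252,1424434,[9501,41001]),
  (1244342,144342443,[28000,32304,42002,23500,27702,1800,30105,24601,39601,41905,42907,27701,29701,34205]),
  (124434434,1422443,[28100,27602,42200,30700,9300,40706,34302,8300,2400,23103,35803]),
  (1244352,1424434522443,[28200,34202,42300,30800,36302,30301,35901,45005,34401,45205,45001,9403,9801,41301]),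
  (124432443,1,[28300,38204,32202,31500,42604,41702,45102,45400]),
  (14342,142443452244343,[34602,8401,30501,36101,45205,34601,45405,45201,9603,10001,41501]),
  (1434434,152244343,[34902,40606,30200,25100,43009,3501,3901,40909,2001,38703,39901,27705,35001,23703,36601]),
  (14352,15243,[40802,30300,30301,41205,34901]),
  (1432443,144345243,[45702,42100,40800,40801,42101,45705,45607]), (14343,14434522443,[41903,45805,45707]),
  (1442,12443434,[45707,41401,43901,8103,28901]), (144434,1443452434,[42400,41100,41101,42401,46005,45907]),
  (1452,14434522443434,[46000,45903,46205,46001,10703,42203,46105,46007]),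
  (142443,142524,[42300,42301,35505]), (1443,1524,[35601]), (144,1443452,[46405,46307]),
  (1044142,14244345224430441,[40800,34800,43204,40800,39704,23301,43307,43607,36103,44407,19401,31601,37201,46305,35701,46505,46301,10703,11101,42601]),
  (104414434,15224430441,[40900,34900,43304,40900,31904,6500,28304,3302,41000,39802,2901,4001,43707,39803,41001,41805,41207,36101,24803,37701]),
  (1044152,1443424430441,[41000,35000,32204,8000,8001,4803,4401,4601,12501,23601,4503,3701,43701,38603,40901,19605,31805,26301,41301,43605,44607,29401,31401,35905]),
  (104412443,124430441,[41100,35100,38104,44706,24204,41100,45102,6001,44007,43905,43901,34803,29801]),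
  (1044143,1424434430441,[41200,35200,43604,41200,36904,41201,8303,32701,33905,38205,40107,19601,42105,36601,38403,41301,8905,43803,44805,36207,2801,3101,4503,4101,38807,24101,36201,36205,11501,43001]),
  (104414,14252244340441,[41300,35300,43704,41300,45003,38405,44207,46807,47209,3601,30901,3803,29705,3001,6505,6703,25403,40109,2701,3101,4303,38105]),
  (104410441,1,[41400,35400,44604,41400,46902,45000,47400]),
  (105142,1425243051,[45600,44302,40402,45605,45007,6001,45609,36401,42805,43301,36505]),
  (10514434,1424434244343051,[45700,44402,32602,18400,6401,40407,21701,20303,40401,41001,43005,40007,45609,2901,32405,40409,6301,38001,26905,25803,44305,39207,25301,38001,36605,38801,44401,9303,28201,38405,11901,43401]),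
  (105152,1443452244343051,[45800,19100,45703,47505,47301,12003,43503,47405,47307]),
  (10512443,12443051,[45900,33702,25000,44606,37506,31000,12901,15803,25601,35601,36203,44601,35503,30501]),
  (105143,1422443051,[46000,44702,37602,47907,4001,25705,35705,36307,44705,35607,25603,38303]),
  (10514,144345240441051,[46100,44802,39101,44903,47605,45205,44905,46001,44101,47705,47607]),
  (10510441,10441051,[46200,48002,45700,45002,45003,45701,43303,42101,45305,36101,42101]),
  (1051051,10441,[46300,48102,36200,36201,42201]),
  (10042,152244300,[42400,41202,48207,41203,42401,43205,42607,37501,26203,39101]),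
  (1004434,1443400,[42500,36300,43204,5601,44907,40305,37401,36105,25401]),
  (10052,142044100,[46602,48407,26801,30301,45707,25301,43907,26801,30301,41301,41901]),
  (1002443,1044100,[41902,41802,40302,45004,41900,41800,40300,38304,39602,48400,46603,42601,45805,36601,42601]),
  (10043,144345243044100,[42800,38402,46705,48607,45001,28403,30801,43501,44801,48405,48307]),
  (1004,1443424434305100,[42900,42901,46005,48707,44201,41203,46805,32401,44003,46505,40407,4301,33605,28101,43101,45405,46407,31201,33201,37705]),
  (1000441,1244300,[45200,45700,45802,48805,45701,36603,31601]),
  (100051,14434244343400,[45300,43303,48505,32601,44203,46705,40607,4501,33805,28301,43301,45605,46607,31401,33401,37905]),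
  (10000,1,[45400,49000]),
  (1142,14434522443434051001,[46000,42100,47303,46705,45803,49105,47303,48703,49005,48801,13503,45003,48905,48807]),
  (114434,14434524340441051001,[46100,34300,10901,12901,46803,35105,46003,40405,46207,34301,46101,38303,44507,10801,28903,9901,37303,37107,8801,31901,31503,43203,44101,45401,49005,48907]),
  (1152,1443452434051001,[32001,38103,46907,29401,49307,32001,38103,43303,44201,45501,49105,49007]),
  (112443,142443404411,[35400,31600,39206,40504,49302,49507,27501,49007,6301,45907,9701,13801,45301]),
  (1143,1443452244343001,[46400,39300,49605,47603,49405,49201,13903,45403,49305,49207]),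
  (114,1424341,[46500,49703,40101,45001,45501]), (110441,14434521,[49700,46702,46703,49505,49407]),
  (11051,144345241,[49800,46001,49605,49507]), (1100,1001,[49900,50003]), (111,100,[45500])]

def gwN : List ℕ := [142, 14434, 152, 12443, 143, 14, 10441, 1051, 100, 11]

def gw (i : ℕ) : List ℕ := dec (gwN.getD i 1)

def masks : List (List ℕ) := [
  [0], [1,0], [2,1,3], [2,1,7,0], [15,12,4,6,14], [24,22,30,5,4,6], [15,12,10,8,19,45,0],
  [21,27,30,8,9,102,64,64], [12,2,65,64,86,154,8,58,0], [446,502,438,67,286,49,6,38,256,256]]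

def mask (i j : ℕ) : ℕ := (masks.getD i []).getD j 0

/-- product of the words `gw k`, `k < i`, with bit `k` of `m` set -/
def pwd (m : ℕ) : ℕ → List ℕ
  | 0 => []
  | k + 1 => pwd m k ++ (bif Nat.beq (m / 2 ^ k % 2) 1 then gw k else [])

def checkU : Bool :=
  (fun R => tgtU.all fun t => hasR t.1 t.2 R) (run R0 certU)

def checkQ : Bool :=
  (fun R => (List.range 10).all fun i =>
    hasR (gw i ++ gw i) (pwd (mask i i) i) R &&
    (List.range i).all fun j =>
      hasR (gw i ++ gw j) (pwd (mask i j) i ++ gw i) R) (run R1Q certQ)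

theorem checkU_true : checkU = true := by decide +kernel

theorem checkQ_true : checkQ = true := by decide +kernel

/-! ### The relations -/

structure Rels {G : Type*} [Group G] (a b c : G) : Prop where
  r1 : a ^ 4 = 1
  r2 : b ^ 4 = 1
  r3 : c ^ 4 = 1
  r4 : (a * b) ^ 2 = 1
  r5 : (b * c) ^ 2 = 1
  r6 : (a * b * c) ^ 2 = 1
  r7 : (a ^ 2 * b ^ 2) ^ 4 = 1
  r8 : a ^ 2 * c ^ 2 * b ^ 2 * (a * c) ^ 2 = 1
  r9 : a⁻¹ * c * a * c⁻¹ * b ^ 2 = 1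

theorem Rels.map {G K : Type*} [Group G] [Group K] {a b c : G} (h : Rels a b c) (f : G →* K) :
    Rels (f a) (f b) (f c) := by
  obtain ⟨h1, h2, h3, h4, h5, h6, h7, h8, h9⟩ := h
  constructor
  · simpa using congrArg f h1
  · simpa using congrArg f h2
  · simpa using congrArg f h3
  · simpa using congrArg f h4
  · simpa using congrArg f h5
  · simpa using congrArg f h6
  · simpa using congrArg f h7
  · simpa using congrArg f h8
  · simpa using congrArg f h9

theorem relsU : Rels Ua Ub Uc := by
  have key : ∀ r ∈ Urels, PresentedGroup.mk Urels r = 1 := fun r hr => PresentedGroup.one_of_mem hr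
  constructor
  · exact key ((FreeGroup.of 0) ^ 4) (by simp [Urels])
  · exact key ((FreeGroup.of 1) ^ 4) (by simp [Urels])
  · exact key ((FreeGroup.of 2) ^ 4) (by simp [Urels])
  · exact key ((FreeGroup.of 0 * FreeGroup.of 1) ^ 2) (by simp [Urels])
  · exact key ((FreeGroup.of 1 * FreeGroup.of 2) ^ 2) (by simp [Urels])
  · exact key ((FreeGroup.of 0 * FreeGroup.of 1 * FreeGroup.of 2) ^ 2) (by simp [Urels])
  · exact key (((FreeGroup.of 0) ^ 2 * (FreeGroup.of 1) ^ 2) ^ 4) (by simp [Urels])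
  · exact key ((FreeGroup.of 0) ^ 2 * (FreeGroup.of 2) ^ 2 * (FreeGroup.of 1) ^ 2 *
      (FreeGroup.of 0 * FreeGroup.of 2) ^ 2) (by simp [Urels])
  · exact key ((FreeGroup.of 0)⁻¹ * FreeGroup.of 2 * FreeGroup.of 0 * (FreeGroup.of 2)⁻¹ *
      (FreeGroup.of 1) ^ 2) (by simp [Urels])

theorem homOf {G : Type*} [Group G] {a b c : G} (h : Rels a b c) :
    ∃ f : UGroup →* G, f Ua = a ∧ f Ub = b ∧ f Uc = c := by
  obtain ⟨h1, h2, h3, h4, h5, h6, h7, h8, h9⟩ := h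
  have H : ∀ r ∈ Urels, FreeGroup.lift ![a, b, c] r = 1 := by
    intro r hr
    simp only [Urels, Set.mem_insert_iff, Set.mem_singleton_iff] at hr
    rcases hr with rfl | rfl | rfl | rfl | rfl | rfl | rfl | rfl | rfl <;>
      simp only [map_mul, map_pow, map_inv, FreeGroup.lift_apply_of] <;> assumption
  exact ⟨PresentedGroup.toGroup H, PresentedGroup.toGroup.of H, PresentedGroup.toGroup.of H,
    PresentedGroup.toGroup.of H⟩

theorem genU (H : Subgroup UGroup) (ha : Ua ∈ H) (hb : Ub ∈ H) (hc : Uc ∈ H) : H = ⊤ := by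
  rw [eq_top_iff]
  intro x _
  refine PresentedGroup.generated_by Urels H (fun j => ?_) x
  fin_cases j
  · exact ha
  · exact hb
  · exact hc

def lt {G : Type*} [Group G] (a b c : G) : ℕ → G
  | 0 => a
  | 1 => a⁻¹
  | 2 => b
  | 3 => b⁻¹
  | 4 => c
  | 5 => c⁻¹
  | 6 => a * c⁻¹
  | 7 => (a * c⁻¹)⁻¹
  | 8 => c⁻¹ * a
  | _ => (c⁻¹ * a)⁻¹

theorem valid_R0 {G : Type*} [Group G] {a b c : G} (h : Rels a b c) : Valid (lt a b c) R0 := by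
  obtain ⟨h1, h2, h3, h4, h5, h6, h7, h8, h9⟩ := h
  simp only [pow_succ, pow_zero, one_mul, mul_assoc] at h1 h2 h3 h4 h5 h6 h7 h8 h9
  simp only [Valid, R0, List.forall_mem_cons]
  simp [ev, lt, mul_assoc, h1, h2, h3, h4, h5, h6, h7, h8, h9]

theorem relU_ev : ∀ t ∈ tgtU, ev (lt Ua Ub Uc) t.1 = ev (lt Ua Ub Uc) t.2 := by
  intro t ht
  have h := checkU_true
  unfold checkU at h
  rw [List.all_eq_true] at h
  exact hasR_ev _ _ _ _ (run_valid _ certU R0 (valid_R0 relsU)) (h t ht)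

theorem relU : Ua * Uy = Ux * Ua ∧ Ub * Ux = Uy⁻¹ * Ub ∧ Ub * Uy = Ux * Ub ∧
    Uc * Ux = Uy⁻¹ * Uc ∧ Ux * Uy = Uy * Ux := by
  have h := relU_ev
  simp only [tgtU, List.forall_mem_cons] at h
  simp only [ev, lt] at h
  simp only [Ux, Uy]
  generalize Ua * Uc⁻¹ = d at *
  generalize Uc⁻¹ * Ua = e at *
  simp [pow_succ, mul_assoc] at h ⊢
  tauto

/-! ### Normality -/

theorem closure_inv_pair {G : Type*} [Group G] (X Y : G) :
    Subgroup.closure {Y⁻¹, X} = Subgroup.closure {X, Y} := by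
  apply le_antisymm
  · rw [Subgroup.closure_le]
    rintro z (rfl | rfl)
    · exact inv_mem (Subgroup.subset_closure (by simp))
    · exact Subgroup.subset_closure (by simp)
  · rw [Subgroup.closure_le]
    rintro z (rfl | rfl)
    · exact Subgroup.subset_closure (by simp)
    · exact inv_mem_iff.mp (Subgroup.subset_closure (by simp))

theorem mem_norm {G : Type*} [Group G] {N : Subgroup G} {g : G}
    (h : N.map (MulAut.conj g).toMonoidHom = N) : g ∈ Subgroup.normalizer (N : Set G) := by
  rw [Subgroup.mem_normalizer_iff]
  intro k
  constructor
  · intro hk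
    rw [← h]
    exact ⟨k, hk, rfl⟩
  · intro hk
    rw [← h] at hk
    obtain ⟨l, hl, hlk⟩ := hk
    have : l = k := (MulAut.conj g).injective hlk
    rwa [← this]

theorem conj_aux {G : Type*} [Group G] {a b c x y : G} (e1 : a * y * a⁻¹ = x)
    (e2 : b * x * b⁻¹ = y⁻¹) (e3 : b * y * b⁻¹ = x) (e4 : c * x * c⁻¹ = y⁻¹)
    (e5 : c * y * c⁻¹ = x) (h : a⁻¹ * c * a * c⁻¹ * b ^ 2 = 1) : a * x * a⁻¹ = y := by
  have hb : b ^ 2 * x⁻¹ * (b ^ 2)⁻¹ = x := by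
    calc b ^ 2 * x⁻¹ * (b ^ 2)⁻¹ = b * (b * x * b⁻¹)⁻¹ * b⁻¹ := by simp only [pow_two]; group
      _ = x := by rw [e2, inv_inv, e3]
  have hg : a⁻¹ * (c * (a * (c⁻¹ * x * c) * a⁻¹) * c⁻¹) * a = x⁻¹ := by
    calc _ = (a⁻¹ * c * a * c⁻¹) * x * (a⁻¹ * c * a * c⁻¹)⁻¹ := by group
      _ = (b ^ 2)⁻¹ * x * b ^ 2 := by rw [eq_inv_of_mul_eq_one_left h, inv_inv]
      _ = (b ^ 2)⁻¹ * (b ^ 2 * x⁻¹ * (b ^ 2)⁻¹) * b ^ 2 := by rw [hb]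
      _ = x⁻¹ := by group
  have hc : c⁻¹ * x * c = y := by rw [← e5]; group
  rw [hc, e1, e4] at hg
  have : x = a⁻¹ * y * a := by
    rw [← inv_inv x, ← hg]; group
  rw [this]; group

theorem normalU (m : ℕ) : (UN m).Normal := by
  obtain ⟨h1, h2, h3, h4, _⟩ := relU
  have e1 : Ua * Uy * Ua⁻¹ = Ux := by simp only [Ux, Uy, pow_succ, pow_zero]; group
  have e2 : Ub * Ux * Ub⁻¹ = Uy⁻¹ := by rw [h2]; group
  have e3 : Ub * Uy * Ub⁻¹ = Ux := by rw [h3]; group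
  have e4 : Uc * Ux * Uc⁻¹ = Uy⁻¹ := by rw [h4]; group
  have e5 : Uc * Uy * Uc⁻¹ = Ux := by simp only [Ux, Uy, pow_succ, pow_zero]; group
  have e0 : Ua * Ux * Ua⁻¹ = Uy := conj_aux e1 e2 e3 e4 e5 relsU.r9
  have key : ∀ g : UGroup, g * Ux * g⁻¹ = Uy⁻¹ → g * Uy * g⁻¹ = Ux → g ∈ Subgroup.normalizer (UN m : Set UGroup) := by
    intro g k1 k2
    apply mem_norm
    unfold UN
    rw [MonoidHom.map_closure, Set.image_pair]
    have f1 : (MulAut.conj g).toMonoidHom (Ux ^ m) = (Uy ^ m)⁻¹ := by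
      rw [map_pow, ← inv_pow]; congr 1
    have f2 : (MulAut.conj g).toMonoidHom (Uy ^ m) = Ux ^ m := by
      rw [map_pow]; congr 1
    rw [f1, f2, closure_inv_pair]
  have keya : Ua ∈ Subgroup.normalizer (UN m : Set UGroup) := by
    apply mem_norm
    unfold UN
    rw [MonoidHom.map_closure, Set.image_pair]
    have f1 : (MulAut.conj Ua).toMonoidHom (Ux ^ m) = Uy ^ m := by
      rw [map_pow]; congr 1
    have f2 : (MulAut.conj Ua).toMonoidHom (Uy ^ m) = Ux ^ m := by
      rw [map_pow]; congr 1
    rw [f1, f2, Set.pair_comm]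
  rw [← Subgroup.normalizer_eq_top_iff]
  exact genU _ keya (key _ e2 e3) (key _ e4 e5)

/-! ### The affine representation -/

def pA : Equiv.Perm (ℤ × ℤ) where
  toFun p := (p.2 + 1, p.1 - 1)
  invFun p := (p.2 + 1, p.1 - 1)
  left_inv p := by ext <;> simp
  right_inv p := by ext <;> simp

def pB : Equiv.Perm (ℤ × ℤ) where
  toFun p := (p.2 + 1, -p.1 - 1)
  invFun p := (-p.2 - 1, p.1 - 1)
  left_inv p := by ext <;> simp
  right_inv p := by ext <;> simp

def pC : Equiv.Perm (ℤ × ℤ) where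
  toFun p := (p.2, -p.1)
  invFun p := (-p.2, p.1)
  left_inv p := by ext <;> simp
  right_inv p := by ext <;> simp

theorem pA_apply (p : ℤ × ℤ) : pA p = (p.2 + 1, p.1 - 1) := rfl
theorem pB_apply (p : ℤ × ℤ) : pB p = (p.2 + 1, -p.1 - 1) := rfl
theorem pC_apply (p : ℤ × ℤ) : pC p = (p.2, -p.1) := rfl
theorem pA_inv (p : ℤ × ℤ) : pA⁻¹ p = (p.2 + 1, p.1 - 1) := rfl
theorem pC_inv (p : ℤ × ℤ) : pC⁻¹ p = (-p.2, p.1) := rfl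

theorem relsP : Rels pA pB pC := by
  constructor <;>
  · ext p <;>
    · simp only [pow_succ, pow_zero, one_mul, Equiv.Perm.mul_apply, pA_apply, pB_apply, pC_apply,
        pA_inv, pC_inv, Equiv.Perm.one_apply]
      ring

theorem zpow_trans (σ : Equiv.Perm (ℤ × ℤ)) (v : ℤ × ℤ) (h : ∀ p, σ p = p + v) (n : ℤ) :
    ∀ p, (σ ^ n) p = p + n • v := by
  induction n using Int.induction_on with
  | zero => simp
  | succ i ih => intro p; rw [zpow_add_one, Equiv.Perm.mul_apply, ih, h, add_smul]; abel_nf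
  | pred i ih =>
    intro p
    have : σ⁻¹ p = p - v := by rw [Equiv.Perm.inv_eq_iff_eq, h]; simp
    rw [zpow_sub_one, Equiv.Perm.mul_apply, ih, this, sub_smul]; abel_nf

def theta : Multiplicative (ℤ × ℤ) →* UGroup :=
  MonoidHom.mk' (fun p => Ux ^ p.toAdd.1 * Uy ^ p.toAdd.2) (by
    intro p q
    have hc : Commute Ux Uy := relU.2.2.2.2
    have h1 : Ux ^ q.toAdd.1 * Uy ^ p.toAdd.2 = Uy ^ p.toAdd.2 * Ux ^ q.toAdd.1 :=
      (hc.zpow_zpow _ _).eq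
    simp only [toAdd_mul, Prod.fst_add, Prod.snd_add, zpow_add, mul_assoc]
    rw [← mul_assoc (Ux ^ q.toAdd.1), h1]
    simp only [mul_assoc])

theorem theta_apply (p : Multiplicative (ℤ × ℤ)) :
    theta p = Ux ^ p.toAdd.1 * Uy ^ p.toAdd.2 := rfl

theorem theta_inj : Function.Injective theta := by
  rw [injective_iff_map_eq_one]
  intro p hp
  obtain ⟨f, fa, _, fc⟩ := homOf relsP
  rw [theta_apply] at hp
  have hx : ∀ q, f Ux q = q + (4, 0) := by
    intro q
    simp only [Ux, map_pow, map_mul, map_inv, fa, fc, pow_succ, pow_zero, one_mul,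
      Equiv.Perm.mul_apply, pA_apply, pC_inv]
    ext <;> simp <;> ring
  have hy : ∀ q, f Uy q = q + (0, 4) := by
    intro q
    simp only [Uy, map_pow, map_mul, map_inv, fa, fc, pow_succ, pow_zero, one_mul,
      Equiv.Perm.mul_apply, pA_apply, pC_inv]
    ext <;> simp <;> ring
  have h := congrArg (fun u => f u (0, 0)) hp
  simp only [map_mul, map_zpow, Equiv.Perm.mul_apply, zpow_trans _ _ hx, zpow_trans _ _ hy,
    map_one, Equiv.Perm.one_apply] at h
  simp at h
  apply Multiplicative.toAdd.injective
  ext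
  · exact h.1
  · exact h.2

def Sm (m : ℕ) : Subgroup (Multiplicative (ℤ × ℤ)) :=
  Subgroup.closure {Multiplicative.ofAdd ((m : ℤ), (0 : ℤ)), Multiplicative.ofAdd ((0 : ℤ), (m : ℤ))}

theorem map_Sm (m : ℕ) : (Sm m).map theta = UN m := by
  unfold Sm UN
  rw [MonoidHom.map_closure, Set.image_pair]
  simp [theta_apply]

def redm (m : ℕ) : Multiplicative (ℤ × ℤ) →* Multiplicative (ZMod m × ZMod m) :=
  AddMonoidHom.toMultiplicative
    (AddMonoidHom.prodMap (Int.castAddHom (ZMod m)) (Int.castAddHom (ZMod m)))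

theorem redm_apply (m : ℕ) (p : Multiplicative (ℤ × ℤ)) :
    redm m p = Multiplicative.ofAdd ((p.toAdd.1 : ZMod m), (p.toAdd.2 : ZMod m)) := rfl

theorem ker_redm (m : ℕ) : (redm m).ker = Sm m := by
  apply le_antisymm
  · intro p hp
    rw [MonoidHom.mem_ker, redm_apply] at hp
    have hp' : ((p.toAdd.1 : ZMod m), (p.toAdd.2 : ZMod m)) = (0, 0) := hp
    rw [Prod.mk.injEq, ZMod.intCast_zmod_eq_zero_iff_dvd, ZMod.intCast_zmod_eq_zero_iff_dvd] at hp'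
    obtain ⟨⟨i, hi⟩, ⟨j, hj⟩⟩ := hp'
    have : p = (Multiplicative.ofAdd ((m : ℤ), (0 : ℤ))) ^ i *
        (Multiplicative.ofAdd ((0 : ℤ), (m : ℤ))) ^ j := by
      apply Multiplicative.toAdd.injective
      ext
      · simp [hi, mul_comm]
      · simp [hj, mul_comm]
    rw [this]
    exact mul_mem (zpow_mem (Subgroup.subset_closure (by simp)) _)
      (zpow_mem (Subgroup.subset_closure (by simp)) _)
  · unfold Sm
    rw [Subgroup.closure_le]
    rintro z (rfl | rfl)
    · simp only [SetLike.mem_coe, MonoidHom.mem_ker, redm_apply]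
      simp
    · simp only [SetLike.mem_coe, MonoidHom.mem_ker, redm_apply]
      simp

theorem index_Sm (m : ℕ) : (Sm m).index = m ^ 2 := by
  rw [← ker_redm, Subgroup.index_ker]
  have : (redm m).range = ⊤ := by
    rw [MonoidHom.range_eq_top]
    intro q
    obtain ⟨i, hi⟩ := ZMod.intCast_surjective q.toAdd.1
    obtain ⟨j, hj⟩ := ZMod.intCast_surjective q.toAdd.2
    refine ⟨Multiplicative.ofAdd (i, j), ?_⟩
    rw [redm_apply]
    apply Multiplicative.toAdd.injective
    ext
    · exact hi
    · exact hj
  rw [this, Subgroup.card_top, Nat.card_congr Multiplicative.toAdd, Nat.card_prod, Nat.card_zmod,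
    sq]

theorem relIndexU (m : ℕ) : (UN m).relIndex (UN 1) = m ^ 2 := by
  have h1 : Sm 1 = ⊤ := by
    rw [← Subgroup.index_eq_one, index_Sm]; norm_num
  rw [← map_Sm m, ← map_Sm 1, Subgroup.relIndex_map_map_of_injective _ _ theta_inj, h1,
    Subgroup.relIndex_top_right, index_Sm]

theorem UN_le (m : ℕ) : UN m ≤ UN 1 := by
  rw [← map_Sm m, ← map_Sm 1]
  apply Subgroup.map_mono
  have h1 : Sm 1 = ⊤ := by
    rw [← Subgroup.index_eq_one, index_Sm]; norm_num
  rw [h1]; exact le_top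

/-! ### Upper bound -/

def Hc {G : Type*} [Group G] (g : ℕ → G) (n : ℕ) : Subgroup G := Subgroup.closure (g '' Set.Iio n)

theorem Hc_mono {G : Type*} [Group G] (g : ℕ → G) {m n : ℕ} (h : m ≤ n) : Hc g m ≤ Hc g n :=
  Subgroup.closure_mono (Set.image_mono (Set.Iio_subset_Iio h))

theorem mem_Hc {G : Type*} [Group G] (g : ℕ → G) {k n : ℕ} (h : k < n) : g k ∈ Hc g n :=
  Subgroup.subset_closure ⟨k, h, rfl⟩

theorem Hc_step {G : Type*} [Group G] (g : ℕ → G) (n : ℕ)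
    (hc : ∀ j < n, ∃ h ∈ Hc g n, g n * g j = h * g n) (hs : g n * g n ∈ Hc g n)
    {k : G} (hk : k ∈ Hc g (n + 1)) : k ∈ Hc g n ∨ k * (g n)⁻¹ ∈ Hc g n := by
  have hc' : ∀ j < n, g n * g j * (g n)⁻¹ ∈ Hc g n := by
    intro j hj
    obtain ⟨h, hh, e⟩ := hc j hj
    rw [e]; simpa using hh
  have hk' : k ∈ Subgroup.closure (g '' Set.Iio (n + 1)) := hk
  induction hk' using Subgroup.closure_induction_right with
  | one => left; exact one_mem _
  | mul_right x hx y hy ih =>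
    obtain ⟨j, hj, rfl⟩ := hy
    have ih := ih hx
    rcases Nat.lt_succ_iff_lt_or_eq.mp hj with hj | rfl
    · rcases ih with ih | ih
      · left; exact mul_mem ih (mem_Hc g hj)
      · right
        have := mul_mem ih (hc' j hj)
        simpa [mul_assoc] using this
    · rcases ih with ih | ih
      · right; simpa using ih
      · left
        have := mul_mem ih hs
        simpa [mul_assoc] using this
  | mul_inv_cancel x hx y hy ih =>
    obtain ⟨j, hj, rfl⟩ := hy
    have ih := ih hx
    rcases Nat.lt_succ_iff_lt_or_eq.mp hj with hj | rfl
    · rcases ih with ih | ih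
      · left; exact mul_mem ih (inv_mem (mem_Hc g hj))
      · right
        have := mul_mem ih (inv_mem (hc' j hj))
        simpa [mul_assoc] using this
    · rcases ih with ih | ih
      · right
        have := mul_mem ih (inv_mem hs)
        simpa [mul_assoc] using this
      · left; exact ih

theorem Hc_card {G : Type*} [Group G] (g : ℕ → G) (n : ℕ)
    (hc : ∀ i < n, ∀ j < i, ∃ h ∈ Hc g i, g i * g j = h * g i)
    (hs : ∀ i < n, g i * g i ∈ Hc g i) :
    (Hc g n : Set G).Finite ∧ (Hc g n : Set G).ncard ≤ 2 ^ n := by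
  induction n with
  | zero => simp [Hc]
  | succ n ih =>
    obtain ⟨hf, hcard⟩ := ih (fun i hi => hc i (by omega)) (fun i hi => hs i (by omega))
    have hsub : (Hc g (n + 1) : Set G) ⊆ (Hc g n : Set G) ∪ (fun k => k * g n) '' (Hc g n : Set G) := by
      intro k hk
      rcases Hc_step g n (hc n (by omega)) (hs n (by omega)) hk with h | h
      · left; exact h
      · right; exact ⟨_, h, by simp⟩
    have hfu := hf.union (hf.image (fun k => k * g n))
    refine ⟨hfu.subset hsub, ?_⟩
    calc _ ≤ _ := Set.ncard_le_ncard hsub hfu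
      _ ≤ _ := Set.ncard_union_le _ _
      _ ≤ 2 ^ n + 2 ^ n := by
        gcongr
        exact (Set.ncard_image_le hf).trans hcard
      _ = 2 ^ (n + 1) := by ring

theorem pwd_mem {G : Type*} [Group G] (f : ℕ → G) (m : ℕ) (i : ℕ) :
    ev f (pwd m i) ∈ Hc (fun k => ev f (gw k)) i := by
  induction i with
  | zero => exact one_mem _
  | succ k ih =>
    rw [pwd, ev_append]
    refine mul_mem (Hc_mono _ (Nat.le_succ k) ih) ?_
    cases Nat.beq (m / 2 ^ k % 2) 1
    · exact one_mem _
    · exact mem_Hc (fun k => ev f (gw k)) (Nat.lt_succ_self k)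

theorem card_upper {G : Type*} [Group G] {a b c : G} (h : Rels a b c)
    (hx : (a * c⁻¹) ^ 4 = 1) (hy : (c⁻¹ * a) ^ 4 = 1)
    (hgen : ∀ H : Subgroup G, a ∈ H → b ∈ H → c ∈ H → H = ⊤) :
    Finite G ∧ Nat.card G ≤ 1024 := by
  have hV : Valid (lt a b c) R1Q := by
    intro p hp
    simp only [R1Q, R0Q, List.mem_cons] at hp
    rcases hp with rfl | rfl | hp
    · simpa [ev, lt, pow_succ, mul_assoc] using hy
    · simpa [ev, lt, pow_succ, mul_assoc] using hx
    · exact valid_R0 h p hp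
  have hR := run_valid _ certQ R1Q hV
  have hC := checkQ_true
  unfold checkQ at hC
  simp only [List.all_eq_true, List.mem_range, Bool.and_eq_true] at hC
  set g : ℕ → G := fun k => ev (lt a b c) (gw k) with hg
  have key := Hc_card g 10
    (fun i hi j hj => by
      have := hasR_ev _ _ _ _ hR ((hC i hi).2 j hj)
      rw [ev_append, ev_append] at this
      exact ⟨_, pwd_mem _ _ _, this⟩)
    (fun i hi => by
      have := hasR_ev _ _ _ _ hR (hC i hi).1
      rw [ev_append] at this
      have h2 : g i * g i = _ := this
      rw [h2]
      exact pwd_mem _ _ _)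
  have g0 : g 0 = c * b := by
    have : gw 0 = [4, 2] := by decide +kernel
    simp [hg, this, ev, lt]
  have g5 : g 5 = c := by
    have : gw 5 = [4] := by decide +kernel
    simp [hg, this, ev, lt]
  have g9 : g 9 = a⁻¹ := by
    have : gw 9 = [1] := by decide +kernel
    simp [hg, this, ev, lt]
  have m0 : c * b ∈ Hc g 10 := g0 ▸ mem_Hc g (by norm_num)
  have m5 : c ∈ Hc g 10 := by
    have := mem_Hc g (show 5 < 10 by norm_num)
    rwa [g5] at this
  have m9 : a ∈ Hc g 10 := by
    have := mem_Hc g (show 9 < 10 by norm_num)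
    rw [g9] at this
    exact inv_mem_iff.mp this
  have hT := hgen (Hc g 10) m9 ((Subgroup.mul_mem_cancel_left _ m5).mp m0) m5
  rw [hT] at key
  obtain ⟨k1, k2⟩ := key
  rw [Subgroup.coe_top] at k1 k2
  refine ⟨Set.finite_univ_iff.mp k1, ?_⟩
  rw [Set.ncard_univ] at k2
  exact k2.trans (by norm_num)

/-! ### Lower bound -/

def tabs : List ℕ := [
  12617074540461811551058193933213955338865282450998779970961842690465044785432377583583027434227473877846415487824129,
  31877019399436665970946858304476176920045787401251143255231118048280188071951625566162305580550821029681922892660748,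
  38649164037836553404226006941160808646843450551327846884144663907171300158046607614828626367485357099657125731795266,
  34475058952217783231733458887695019793651273293860270459787512200045373306862538570485146824827584652217355252008847,
  30149830985038997073656986582383850353126741179697324128003104607307672342015371292585606604875314955760789369921923,
  30771383751878199421832817975884852945645869337363507739808625949922795976925361402121849911026405673785897254921928]

def pf (l i : ℕ) : ℕ := tabs.getD l 0 / 64 ^ i % 64

def fn (l : ℕ) (i : Fin 64) : Fin 64 := ⟨pf l i, Nat.mod_lt _ (by norm_num)⟩

def qA : Equiv.Perm (Fin 64) := ⟨fn 0, fn 1, by unfold Function.LeftInverse; decide +kernel,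
  by unfold Function.RightInverse Function.LeftInverse; decide +kernel⟩

def qB : Equiv.Perm (Fin 64) := ⟨fn 2, fn 3, by unfold Function.LeftInverse; decide +kernel,
  by unfold Function.RightInverse Function.LeftInverse; decide +kernel⟩

def qC : Equiv.Perm (Fin 64) := ⟨fn 4, fn 5, by unfold Function.LeftInverse; decide +kernel,
  by unfold Function.RightInverse Function.LeftInverse; decide +kernel⟩

theorem relsF : Rels qA qB qC := by
  constructor <;> (rw [Equiv.ext_iff]; decide +kernel)

theorem qx : (qA * qC⁻¹) ^ 4 = 1 := by rw [Equiv.ext_iff]; decide +kernel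

theorem qy : (qC⁻¹ * qA) ^ 4 = 1 := by rw [Equiv.ext_iff]; decide +kernel

def actL (l c : ℕ) : ℕ := 64 * pf l (c / 64) + pf l (c % 64)

def actW : List ℕ → ℕ → ℕ
  | [], c => c
  | l :: w, c => actL l (actW w c)

def orb : ℕ → List ℕ
  | 0 => [1]
  | i + 1 => orb i ++ (orb i).map (actW (gw i))

def nd : List ℕ → ℕ → Bool
  | [], _ => true
  | c :: r, m => bif Nat.testBit m c then false else nd r (m ||| 2 ^ c)

theorem nd_nodup : ∀ (L : List ℕ) (m : ℕ), nd L m = true →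
    L.Nodup ∧ ∀ c ∈ L, Nat.testBit m c = false
  | [], _, _ => by simp
  | c :: r, m, h => by
    rw [nd] at h
    cases hb : Nat.testBit m c with
    | true => simp [hb] at h
    | false =>
      rw [hb] at h
      obtain ⟨h1, h2⟩ := nd_nodup r _ h
      have h3 : ∀ e ∈ r, Nat.testBit m e = false ∧ e ≠ c := by
        intro e he
        have := h2 e he
        rw [Nat.testBit_or, Bool.or_eq_false_iff, Nat.testBit_two_pow] at this
        refine ⟨this.1, fun hh => ?_⟩
        have h4 := this.2
        simp [hh] at h4
      refine ⟨List.nodup_cons.mpr ⟨fun hc => (h3 c hc).2 rfl, h1⟩, ?_⟩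
      intro e he
      rcases List.mem_cons.mp he with rfl | he
      · exact hb
      · exact (h3 e he).1

theorem orb_nd : nd (orb 10) 0 = true := by decide +kernel

theorem gw_small : ((List.range 10).all fun i => (gw i).all fun l => Nat.blt l 6) = true := by
  decide +kernel

theorem orb_length (n : ℕ) : (orb n).length = 2 ^ n := by
  induction n with
  | zero => rfl
  | succ n ih => simp [orb, ih]; ring

def code (σ : Equiv.Perm (Fin 64)) : ℕ := 64 * (σ 0).val + (σ 1).val

theorem act_code (l : ℕ) (hl : l < 6) (σ : Equiv.Perm (Fin 64)) :
    actL l (code σ) = code (lt qA qB qC l * σ) := by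
  have h1 : code σ / 64 = (σ 0).val := by unfold code; omega
  have h2 : code σ % 64 = (σ 1).val := by unfold code; omega
  unfold actL
  rw [h1, h2]
  interval_cases l <;> rfl

theorem actW_code (w : List ℕ) (hw : ∀ l ∈ w, l < 6) (σ : Equiv.Perm (Fin 64)) :
    actW w (code σ) = code (ev (lt qA qB qC) w * σ) := by
  induction w with
  | nil => simp [actW, ev]
  | cons l w ih =>
    rw [actW, ih (fun k hk => hw k (by simp [hk])), act_code l (hw l (by simp)), ev, mul_assoc]

theorem ev_map {G K : Type*} [Group G] [Group K] (f : G →* K) (a b c : G) (w : List ℕ)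
    (hw : ∀ l ∈ w, l < 6) : ev (lt (f a) (f b) (f c)) w = f (ev (lt a b c) w) := by
  induction w with
  | nil => simp [ev]
  | cons l w ih =>
    rw [ev, ev, map_mul, ih (fun k hk => hw k (by simp [hk]))]
    congr 1
    have : l < 6 := hw l (by simp)
    interval_cases l <;> simp [lt]

theorem orb_mem {G : Type*} [Group G] (f : G →* Equiv.Perm (Fin 64)) (a b c : G)
    (ha : f a = qA) (hb : f b = qB) (hc : f c = qC) (n : ℕ) (hn : n ≤ 10) :
    ∀ v ∈ orb n, ∃ q : G, code (f q) = v := by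
  induction n with
  | zero =>
    intro v hv
    refine ⟨1, ?_⟩
    simp only [orb, List.mem_singleton] at hv
    rw [hv, map_one]; rfl
  | succ n ih =>
    intro v hv
    rw [orb, List.mem_append, List.mem_map] at hv
    rcases hv with hv | ⟨u, hu, rfl⟩
    · exact ih (by omega) v hv
    · obtain ⟨q, rfl⟩ := ih (by omega) u hu
      have hs := gw_small
      simp only [List.all_eq_true, List.mem_range, Nat.blt_eq] at hs
      refine ⟨ev (lt a b c) (gw n) * q, ?_⟩
      rw [actW_code _ (hs n (by omega)), map_mul, ← ev_map f a b c _ (hs n (by omega)), ha, hb, hc]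

theorem card_lower {G : Type*} [Group G] [Finite G] (f : G →* Equiv.Perm (Fin 64)) (a b c : G)
    (ha : f a = qA) (hb : f b = qB) (hc : f c = qC) : 1024 ≤ Nat.card G := by
  have hn := (nd_nodup _ _ orb_nd).1
  have hsub : ((orb 10).toFinset : Set ℕ) ⊆ Set.range (fun q : G => code (f q)) := by
    intro v hv
    exact orb_mem f a b c ha hb hc 10 le_rfl v (by simpa using hv)
  have h1 := Set.ncard_le_ncard hsub (Set.finite_range _)
  rw [Set.ncard_coe_finset, List.toFinset_card_of_nodup hn, orb_length] at h1
  have h2 : (Set.range (fun q : G => code (f q))).ncard ≤ Nat.card G := by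
    rw [← Set.image_univ, ← Set.ncard_univ]
    exact Set.ncard_image_le Set.finite_univ
  calc 1024 = 2 ^ 10 := by norm_num
    _ ≤ _ := h1.trans h2

theorem index_one : (UN 1).index = 1024 := by
  have := normalU 1
  rw [Subgroup.index]
  have hx : (QuotientGroup.mk' (UN 1) Ua * (QuotientGroup.mk' (UN 1) Uc)⁻¹) ^ 4 = 1 := by
    rw [← map_inv, ← map_mul, ← map_pow, ← MonoidHom.mem_ker, QuotientGroup.ker_mk']
    exact Subgroup.subset_closure (by simp [Ux])
  have hy : ((QuotientGroup.mk' (UN 1) Uc)⁻¹ * QuotientGroup.mk' (UN 1) Ua) ^ 4 = 1 := by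
    rw [← map_inv, ← map_mul, ← map_pow, ← MonoidHom.mem_ker, QuotientGroup.ker_mk']
    exact Subgroup.subset_closure (by simp [Uy])
  obtain ⟨hfin, hle⟩ := card_upper (relsU.map (QuotientGroup.mk' (UN 1))) hx hy (by
    intro H ha hb hc
    have h := genU (H.comap (QuotientGroup.mk' (UN 1))) ha hb hc
    rw [eq_top_iff]
    intro q _
    obtain ⟨u, rfl⟩ := QuotientGroup.mk'_surjective (UN 1) q
    have : u ∈ H.comap (QuotientGroup.mk' (UN 1)) := by rw [h]; trivial
    exact this)
  apply le_antisymm hle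
  obtain ⟨f, fa, fb, fc⟩ := homOf relsF
  have hk : UN 1 ≤ f.ker := by
    unfold UN
    rw [Subgroup.closure_le]
    rintro z (rfl | rfl)
    · simp only [SetLike.mem_coe, MonoidHom.mem_ker, pow_one, Ux]
      rw [map_pow, map_mul, map_inv, fa, fc, qx]
    · simp only [SetLike.mem_coe, MonoidHom.mem_ker, pow_one, Uy]
      rw [map_pow, map_mul, map_inv, fa, fc, qy]
  exact card_lower (QuotientGroup.lift (UN 1) f hk) (QuotientGroup.mk' (UN 1) Ua)
    (QuotientGroup.mk' (UN 1) Ub) (QuotientGroup.mk' (UN 1) Uc) fa fb fc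

end UProof

/-- For every positive integer `m`, the subgroup `N_m = ⟨x^m, y^m⟩` of `U` is a normal
subgroup of index `1024 m^2`. -/
theorem Nm_normal_index (m : ℕ) (hm : 0 < m) :
    (UN m).Normal ∧ (UN m).index = 1024 * m ^ 2 := by
  have h1 := UProof.relIndexU m
  have h2 := Subgroup.relIndex_mul_index (UProof.UN_le m)
  refine ⟨UProof.normalU m, ?_⟩
  rw [← h2, h1, UProof.index_one, mul_comm]
end
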